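/- There is an absolute constant C > 0 such that the following holds. Fix d ≥ 10, let q be a probability distribution on [0,2π) invariant under the maps θ ↦ −θ and θ ↦ θ + π/2 (mod 2π), and let Q_T be the q-Kac walk of length T on ℝ^{d×d}. Let Σ be a uniformly random signed permutation matrix in SO(d), let ξ be a uniform random vector in {±1}^d conditioned on ∏_{i=1}^d ξ_i = 1, with Σ, ξ, and the walk mutually independent, and let D_ξ be the diagonal matrix with diagonal ξ. Assume d·exp(−T/(d−1)) < 1. Then the total variation distance between the law of Q_T and the law of Σ Q_T D_ξ is at most 2d·exp(−T/(d−1)) / (1 − d·exp(−T/(d−1))) + C ( d^{1/2} e^{−T/(6d)} + (d!)^{1/2} ((√5 − 1)/2)^{T/2} ). -/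

import Mathlib

noncomputable section

open MeasureTheory Real
open scoped ENNReal

namespace KacJL

instance matrixMeasurableSpace {m n : Type*} : MeasurableSpace (Matrix m n ℝ) :=
  inferInstanceAs (MeasurableSpace (m → n → ℝ))

/-- The rotation by angle `θ` in the `(i,j)` coordinate plane of `ℝ^d`. -/
def rotM (d : ℕ) (i j : Fin d) (θ : ℝ) : Matrix (Fin d) (Fin d) ℝ :=
  Matrix.of fun k l =>
    if k = i ∧ l = i then Real.cos θ
    else if k = i ∧ l = j then -Real.sin θ
    else if k = j ∧ l = i then Real.sin θ
    else if k = j ∧ l = j then Real.cos θ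
    else if k = l then 1 else 0

/-- The uniform distribution on pairs of distinct coordinates in `Fin d`. -/
def pairUniform (d : ℕ) : Measure (Fin d × Fin d) :=
  ((d * (d - 1) : ℕ) : ℝ≥0∞)⁻¹ •
    (Measure.count.restrict {p : Fin d × Fin d | p.1 ≠ p.2})

/-- The uniform distribution on `[0, 2π)`. -/
def angleUniform : Measure ℝ :=
  (ENNReal.ofReal (2 * Real.pi))⁻¹ • (volume.restrict (Set.Ico 0 (2 * Real.pi)))

/-- The distribution of the update variables of one step of the `q`-Kac walk. -/
def qKacParam (d : ℕ) (q : Measure ℝ) : Measure ((Fin d × Fin d) × ℝ) :=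
  (pairUniform d).prod q

/-- The product `R_{i_T,j_T,θ_T} ⋯ R_{i_1,j_1,θ_1}` of the rotations determined by the
update variables `ω`. -/
def kacMatrix {d T : ℕ} (ω : Fin T → (Fin d × Fin d) × ℝ) : Matrix (Fin d) (Fin d) ℝ :=
  ((List.ofFn fun t => rotM d (ω t).1.1 (ω t).1.2 (ω t).2).reverse).prod

/-- The law of the `q`-Kac walk of length `T` on `ℝ^d`. -/
def qKacMeasure (d T : ℕ) (q : Measure ℝ) : Measure (Matrix (Fin d) (Fin d) ℝ) :=
  Measure.map kacMatrix (Measure.pi fun _ : Fin T => qKacParam d q)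

/-- Reduction of a real number modulo `2π` to `[0, 2π)`. -/
def mod2pi (x : ℝ) : ℝ := 2 * Real.pi * Int.fract (x / (2 * Real.pi))

/-- The uniform distribution on sign vectors `ξ ∈ {±1}^d` conditioned on `∏ i ξ_i = 1`. -/
def signMeasure (d : ℕ) : Measure (Fin d → ℝ) :=
  ((2 ^ (d - 1) : ℕ) : ℝ≥0∞)⁻¹ •
    (Measure.count.restrict
      {v : Fin d → ℝ | (∀ i, v i = 1 ∨ v i = -1) ∧ ∏ i, v i = 1})

/-- The total variation distance between two measures. -/
def tvDist {α : Type*} [MeasurableSpace α] (μ ν : Measure α) : ℝ :=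
  ⨆ s : {s : Set α // MeasurableSet s}, |(μ s).toReal - (ν s).toReal|

/-- The uniform distribution on signed permutation matrices of determinant `1`
(i.e., signed permutation matrices in `SO(d)`). -/
def signedPermSO (d : ℕ) : Measure (Matrix (Fin d) (Fin d) ℝ) :=
  ((d.factorial * 2 ^ (d - 1) : ℕ) : ℝ≥0∞)⁻¹ •
    (Measure.count.restrict
      {M : Matrix (Fin d) (Fin d) ℝ |
        (∀ i j, M i j = 0 ∨ M i j = 1 ∨ M i j = -1) ∧
        (∃ σ : Equiv.Perm (Fin d), ∀ i j, M i j ≠ 0 ↔ σ j = i) ∧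
        M.det = 1})


section Spec
variable {n : ℕ}

/-- Permutations supported in `A`. -/
def SA (A : Finset (Fin n)) : Finset (Equiv.Perm (Fin n)) :=
  Finset.univ.filter fun g => ∀ x, x ∉ A → g x = x

def QA (A : Finset (Fin n)) (v : Equiv.Perm (Fin n) → ℝ) : Equiv.Perm (Fin n) → ℝ :=
  fun σ => ∑ g ∈ SA A, v (σ * g)

def ZB (B : Finset (Fin n)) (v : Equiv.Perm (Fin n) → ℝ) : Equiv.Perm (Fin n) → ℝ :=
  fun σ => ∑ a ∈ B, ∑ b ∈ B, v (σ * Equiv.swap a b)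

lemma mem_SA {A : Finset (Fin n)} {g : Equiv.Perm (Fin n)} :
    g ∈ SA A ↔ ∀ x, x ∉ A → g x = x := by simp [SA]

lemma SA_mul {A : Finset (Fin n)} {g h : Equiv.Perm (Fin n)} (hg : g ∈ SA A) (hh : h ∈ SA A) :
    g * h ∈ SA A := by
  rw [mem_SA] at *
  intro x hx
  rw [Equiv.Perm.mul_apply, hh x hx, hg x hx]

lemma SA_inv {A : Finset (Fin n)} {g : Equiv.Perm (Fin n)} (hg : g ∈ SA A) :
    g⁻¹ ∈ SA A := by
  rw [mem_SA] at *
  intro x hx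
  rw [Equiv.Perm.inv_eq_iff_eq, hg x hx]

lemma SA_one {A : Finset (Fin n)} : (1 : Equiv.Perm (Fin n)) ∈ SA A := by
  rw [mem_SA]; intro x _; rfl

lemma SA_mono {A B : Finset (Fin n)} (h : A ⊆ B) {g : Equiv.Perm (Fin n)} (hg : g ∈ SA A) :
    g ∈ SA B := by
  rw [mem_SA] at *
  exact fun x hx => hg x fun hA => hx (h hA)

lemma SA_maps {A : Finset (Fin n)} {g : Equiv.Perm (Fin n)} (hg : g ∈ SA A) {x : Fin n}
    (hx : x ∈ A) : g x ∈ A := by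
  by_contra h
  have h1 := mem_SA.1 hg _ h
  exact h (by rw [g.injective h1]; exact hx)

lemma SA_swap {A : Finset (Fin n)} {a b : Fin n} (ha : a ∈ A) (hb : b ∈ A) :
    Equiv.swap a b ∈ SA A := by
  rw [mem_SA]
  intro x hx
  apply Equiv.swap_apply_of_ne_of_ne
  · rintro rfl; exact hx ha
  · rintro rfl; exact hx hb

lemma sum_SA_left {A : Finset (Fin n)} {h : Equiv.Perm (Fin n)} (hh : h ∈ SA A)
    (f : Equiv.Perm (Fin n) → ℝ) : ∑ g ∈ SA A, f (h * g) = ∑ g ∈ SA A, f g := by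
  refine Finset.sum_bij' (fun g _ => h * g) (fun g _ => h⁻¹ * g) ?_ ?_ ?_ ?_ ?_
  · exact fun g hg => SA_mul hh hg
  · exact fun g hg => SA_mul (SA_inv hh) hg
  · intros; simp
  · intros; simp
  · intros; rfl

lemma sum_SA_right {A : Finset (Fin n)} {h : Equiv.Perm (Fin n)} (hh : h ∈ SA A)
    (f : Equiv.Perm (Fin n) → ℝ) : ∑ g ∈ SA A, f (g * h) = ∑ g ∈ SA A, f g := by
  refine Finset.sum_bij' (fun g _ => g * h) (fun g _ => g * h⁻¹) ?_ ?_ ?_ ?_ ?_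
  · exact fun g hg => SA_mul hg hh
  · exact fun g hg => SA_mul hg (SA_inv hh)
  · intros; simp
  · intros; simp
  · intros; rfl

lemma sum_maps {A : Finset (Fin n)} {h : Equiv.Perm (Fin n)} (hh : h ∈ SA A)
    (f : Fin n → ℝ) : ∑ x ∈ A, f (h x) = ∑ x ∈ A, f x := by
  refine Finset.sum_bij' (fun g _ => h g) (fun g _ => h⁻¹ g) ?_ ?_ ?_ ?_ ?_
  · exact fun g hg => SA_maps hh hg
  · exact fun g hg => SA_maps (SA_inv hh) hg
  · intros; simp
  · intros; simp
  · intros; rfl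

lemma QA_inv {A : Finset (Fin n)} (v : Equiv.Perm (Fin n) → ℝ) {h : Equiv.Perm (Fin n)}
    (hh : h ∈ SA A) (σ) : QA A v (σ * h) = QA A v σ := by
  unfold QA
  simp only [mul_assoc]
  exact sum_SA_left hh (fun g => v (σ * g))

lemma ZB_QA {A B : Finset (Fin n)} (hAB : A ⊆ B) (v : Equiv.Perm (Fin n) → ℝ) :
    ZB B (QA A v) = QA A (ZB B v) := by
  funext σ
  unfold ZB QA
  have : ∀ g ∈ SA A, ∑ a ∈ B, ∑ b ∈ B, v (σ * g * Equiv.swap a b) =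
      ∑ a ∈ B, ∑ b ∈ B, v (σ * Equiv.swap a b * g) := by
    intro g hg
    have hgB := SA_mono hAB hg
    rw [← sum_maps hgB (fun a => ∑ b ∈ B, v (σ * Equiv.swap a b * g))]
    refine Finset.sum_congr rfl fun a _ => ?_
    rw [← sum_maps hgB (fun b => v (σ * Equiv.swap (g a) b * g))]
    refine Finset.sum_congr rfl fun b _ => ?_
    rw [mul_assoc, mul_assoc, Equiv.mul_swap_eq_swap_mul]
  rw [Finset.sum_congr rfl this]
  rw [Finset.sum_comm (s := SA A)]
  refine Finset.sum_congr rfl fun a _ => ?_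
  rw [Finset.sum_comm]

lemma QA_QA_sub {A A' : Finset (Fin n)} (hA : A ⊆ A') (v : Equiv.Perm (Fin n) → ℝ) :
    QA A' (QA A v) = fun σ => (SA A).card * QA A' v σ := by
  funext σ
  unfold QA
  rw [Finset.sum_comm]
  have : ∀ g ∈ SA A, ∑ h ∈ SA A', v (σ * h * g) = ∑ h ∈ SA A', v (σ * h) := by
    intro g hg
    simp only [mul_assoc]
    exact sum_SA_right (SA_mono hA hg) (fun h => v (σ * h))
  rw [Finset.sum_congr rfl this]
  simp

lemma QA_QA_comm {A A' : Finset (Fin n)} (hA : Disjoint A A') (v : Equiv.Perm (Fin n) → ℝ) :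
    QA A' (QA A v) = QA A (QA A' v) := by
  funext σ
  unfold QA
  rw [Finset.sum_comm]
  refine Finset.sum_congr rfl fun g hg => Finset.sum_congr rfl fun h hh => ?_
  rw [mul_assoc, mul_assoc]
  congr 2
  apply (Equiv.Perm.Disjoint.commute _).eq
  intro x
  by_cases hx : x ∈ A'
  · right; exact mem_SA.1 hg x (fun h => (Finset.disjoint_left.1 hA h) hx)
  · left; exact mem_SA.1 hh x hx

lemma QA_zero (A : Finset (Fin n)) : QA A (0 : Equiv.Perm (Fin n) → ℝ) = 0 := by
  funext σ; simp [QA]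

lemma star_zero {A : Finset (Fin n)} {i : Fin n} (hi : i ∉ A) {w : Equiv.Perm (Fin n) → ℝ}
    (hw : ∀ h ∈ SA A, ∀ σ, w (σ * h) = w σ) (hQ : QA (insert i A) w = 0) (σ) :
    w σ + ∑ c ∈ A, w (σ * Equiv.swap i c) = 0 := by
  set u : Equiv.Perm (Fin n) → ℝ := fun σ => ∑ c ∈ insert i A, w (σ * Equiv.swap i c) with hu
  have hu0 : ∀ σ, u σ = w σ + ∑ c ∈ A, w (σ * Equiv.swap i c) := by
    intro σ
    rw [hu]; simp only
    rw [Finset.sum_insert hi, Equiv.swap_self]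
    rfl
  have hinv : ∀ h ∈ SA (insert i A), ∀ σ, u (σ * h) = u σ := by
    intro h hh σ
    rw [hu]; simp only
    rw [← sum_maps hh (fun c => w (σ * Equiv.swap i c))]
    refine Finset.sum_congr rfl fun c hc => ?_
    have hk : Equiv.swap i (h c) * h * Equiv.swap i c ∈ SA A := by
      have h1 : Equiv.swap i (h c) * h * Equiv.swap i c ∈ SA (insert i A) :=
        SA_mul (SA_mul (SA_swap (by simp) (SA_maps hh hc)) hh) (SA_swap (by simp) hc)
      rw [mem_SA] at h1 ⊢
      intro x hx
      by_cases hxi : x = i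
      · subst hxi; simp
      · exact h1 x (by simp [hx, hxi])
    rw [← hw _ hk (σ * Equiv.swap i (h c))]
    congr 1
    simp [mul_assoc, Equiv.swap_mul_self_mul]
  have h1 : QA (insert i A) u σ = (SA (insert i A)).card * u σ := by
    unfold QA
    rw [Finset.sum_congr rfl (fun h hh => hinv h hh σ)]
    simp
  have h2 : QA (insert i A) u σ = 0 := by
    unfold QA
    rw [hu]; simp only
    rw [Finset.sum_comm]
    refine Finset.sum_eq_zero fun c hc => ?_
    have := sum_SA_right (SA_swap (by simp) hc : Equiv.swap i c ∈ SA (insert i A))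
      (fun h => w (σ * h))
    simp only [mul_assoc] at this ⊢
    rw [this]
    exact congrFun hQ σ
  rw [h1] at h2
  have hc : ((SA (insert i A)).card : ℝ) ≠ 0 := by
    have : 0 < (SA (insert i A)).card := Finset.card_pos.2 ⟨1, SA_one⟩
    positivity
  rw [← hu0]
  exact (mul_eq_zero.1 h2).resolve_left hc

lemma layer_step {A B : Finset (Fin n)} (hAB : A ⊆ B) {v : Equiv.Perm (Fin n) → ℝ} {ζ : ℝ}
    (hv : ZB B v = ζ • v)
    (hQ : ∀ A' ⊆ B, A'.card = A.card + 1 → QA A' v = 0) :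
    ZB (B \ A) (QA A v) = (ζ - (A.card : ℝ) ^ 2 + 2 * ((B \ A).card : ℝ)) • QA A v := by
  have h1 : ZB B (QA A v) = ζ • QA A v := by
    rw [ZB_QA hAB, hv]
    funext σ
    simp [QA, Finset.mul_sum]
  set w := QA A v with hw
  have hinv : ∀ h ∈ SA A, ∀ σ, w (σ * h) = w σ := fun h hh σ => QA_inv v hh σ
  have hstar : ∀ i ∈ B \ A, ∀ σ, ∑ c ∈ A, w (σ * Equiv.swap i c) = - w σ := by
    intro i hi σ
    rw [Finset.mem_sdiff] at hi
    have hq : QA (insert i A) w = 0 := by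
      rw [hw, QA_QA_sub (Finset.subset_insert i A), hQ (insert i A)
        (Finset.insert_subset hi.1 hAB) (Finset.card_insert_of_notMem hi.2)]
      funext σ; simp
    have := star_zero hi.2 hinv hq σ
    linarith
  funext σ
  have h2 := congrFun h1 σ
  unfold ZB at h2 ⊢
  rw [← Finset.sum_sdiff hAB] at h2
  simp only [← Finset.sum_sdiff hAB, Finset.sum_add_distrib] at h2
  have e1 : ∑ a ∈ A, ∑ b ∈ A, w (σ * Equiv.swap a b) = (A.card : ℝ) ^ 2 * w σ := by
    rw [Finset.sum_congr rfl fun a ha => Finset.sum_congr rfl fun b hb =>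
      hinv _ (SA_swap ha hb) σ]
    simp; ring
  have e2 : ∑ a ∈ B \ A, ∑ b ∈ A, w (σ * Equiv.swap a b) = - ((B \ A).card : ℝ) * w σ := by
    rw [Finset.sum_congr rfl fun a ha => hstar a ha σ]
    simp
  have e3 : ∑ a ∈ A, ∑ b ∈ B \ A, w (σ * Equiv.swap a b) = - ((B \ A).card : ℝ) * w σ := by
    rw [Finset.sum_comm, ← e2]
    refine Finset.sum_congr rfl fun a _ => Finset.sum_congr rfl fun b _ => ?_
    rw [Equiv.swap_comm]
  rw [e1, e2, e3] at h2
  simp only [Pi.smul_apply, smul_eq_mul] at h2 ⊢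
  linarith

lemma QA_disj_zero {A A' : Finset (Fin n)} (hA : Disjoint A A') {v : Equiv.Perm (Fin n) → ℝ}
    (h : QA A' v = 0) : QA A' (QA A v) = 0 := by
  rw [QA_QA_comm hA, h, QA_zero]

lemma QA_singleton (a : Fin n) (v : Equiv.Perm (Fin n) → ℝ) : QA {a} v = v := by
  have : SA {a} = ({1} : Finset (Equiv.Perm (Fin n))) := by
    ext g
    rw [mem_SA, Finset.mem_singleton]
    constructor
    · intro h
      have hinv : ∀ x, x ≠ a → g x = x := fun x hx => h x (by simpa using hx)
      ext x
      by_cases hx : x = a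
      · subst hx
        by_contra hne
        have hne' : g x ≠ x := fun h => hne (by rw [h]; rfl)
        exact hne' (g.injective (hinv _ hne'))
      · rw [hinv x hx]; rfl
    · rintro rfl x _; rfl
  funext σ
  simp [QA, this]

lemma specA (N : ℕ) : ∀ (p : ℕ) (B : Finset (Fin n)), B.card ≤ N →
    ∀ (v : Equiv.Perm (Fin n) → ℝ) (ζ : ℝ), v ≠ 0 → ZB B v = ζ • v →
    (∀ A ⊆ B, A.card = p + 1 → QA A v = 0) → ζ ≤ B.card * p := by
  induction N with
  | zero =>
    intro p B hB v ζ hv hZ _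
    have : B = ∅ := Finset.card_eq_zero.1 (by omega)
    subst this
    obtain ⟨σ, hσ⟩ := Function.ne_iff.1 hv
    have := congrFun hZ σ
    simp [ZB] at this
    rcases this with h | h
    · simp [h]
    · exact absurd h hσ
  | succ N ihN =>
    intro p
    induction p with
    | zero =>
      intro B hB v ζ hv hZ hQ
      rcases B.eq_empty_or_nonempty with h | ⟨a, ha⟩
      · exact ihN 0 B (by simp [h]) v ζ hv hZ hQ
      · exfalso
        apply hv
        rw [← QA_singleton a v]
        exact hQ {a} (by simpa using ha) (by simp)
    | succ p ihp =>
      intro B hB v ζ hv hZ hQ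
      by_cases h : ∃ A ⊆ B, A.card = p + 1 ∧ QA A v ≠ 0
      · obtain ⟨A, hAB, hA, hne⟩ := h
        have hs := layer_step hAB hZ (by rw [hA]; exact hQ)
        have hc : (B \ A).card = B.card - A.card := Finset.card_sdiff_of_subset hAB
        have hle := Finset.card_le_card hAB
        have := ihN (p + 1) (B \ A) (by omega) (QA A v) _ hne hs (by
          intro A' hA' hcard
          apply QA_disj_zero
          · exact (Finset.disjoint_of_subset_left hA' Finset.sdiff_disjoint).symm
          · exact hQ A' (hA'.trans Finset.sdiff_subset) hcard)
        have hcR : ((B \ A).card : ℝ) = B.card - A.card := by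
          rw [hc, Nat.cast_sub hle]
        rw [hcR, hA] at this
        have hleR : ((p + 1 : ℕ) : ℝ) ≤ B.card := by exact_mod_cast hA ▸ hle
        push_cast at *
        nlinarith
      · push Not at h
        have := ihp B hB v ζ hv hZ h
        push_cast
        have : (0:ℝ) ≤ B.card := by positivity
        nlinarith

lemma layer_one {v : Equiv.Perm (Fin n) → ℝ} {ζ : ℝ} (hZ : ZB Finset.univ v = ζ • v)
    (p : ℕ) (A : Finset (Fin n)) (hA : A.card = p) (hne : QA A v ≠ 0)
    (hQ : ∀ A : Finset (Fin n), A.card = p + 1 → QA A v = 0) :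
    ζ ≤ (n : ℝ) ^ 2 - ((n : ℝ) - p) * max (2 * (p : ℝ)) (n : ℝ) := by
  have hs := layer_step (Finset.subset_univ A) hZ (by rw [hA]; exact fun A' _ h => hQ A' h)
  have hle : A.card ≤ n := by simpa using Finset.card_le_univ A
  have hc : (Finset.univ \ A).card = n - A.card := by
    rw [Finset.card_sdiff_of_subset (Finset.subset_univ A)]; simp
  have hcR : ((Finset.univ \ A).card : ℝ) = n - p := by
    rw [hc, Nat.cast_sub hle, hA]
  have b1 := specA _ p (Finset.univ \ A) le_rfl (QA A v) _ hne hs (by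
    intro A' hA' hcard
    apply QA_disj_zero
    · exact (Finset.disjoint_of_subset_left hA' Finset.sdiff_disjoint).symm
    · exact hQ A' hcard)
  have b2 := specA _ (Finset.univ \ A).card (Finset.univ \ A) le_rfl (QA A v) _ hne hs (by
    intro A' hA' hcard
    have := Finset.card_le_card hA'
    omega)
  rw [hcR, hA] at b1 b2
  have hpn : (p : ℝ) ≤ n := by exact_mod_cast hA ▸ hle
  rcases max_cases (2 * (p:ℝ)) n with ⟨h, _⟩ | ⟨h, _⟩ <;> rw [h] <;> nlinarith

lemma layer_all (hn : 0 < n) {v : Equiv.Perm (Fin n) → ℝ} {ζ : ℝ} (hv : v ≠ 0)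
    (hZ : ZB Finset.univ v = ζ • v) :
    ∀ (p : ℕ), p ≤ n → (∀ A : Finset (Fin n), A.card = p + 1 → QA A v = 0) →
    ζ ≤ (n : ℝ) ^ 2 - ((n : ℝ) - p) * max (2 * (p : ℝ)) (n : ℝ) := by
  intro p
  induction p with
  | zero =>
    intro _ hQ
    exfalso
    apply hv
    rw [← QA_singleton ⟨0, hn⟩ v]
    exact hQ _ (by simp)
  | succ p ih =>
    intro hp hQ
    by_cases h : ∃ A : Finset (Fin n), A.card = p + 1 ∧ QA A v ≠ 0
    · obtain ⟨A, hA, hne⟩ := h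
      exact layer_one hZ (p + 1) A hA hne hQ
    · push Not at h
      refine (ih (by omega) h).trans ?_
      have hpn : (p : ℝ) + 1 ≤ n := by exact_mod_cast hp
      push_cast
      have hp0 : (0:ℝ) ≤ p := by positivity
      rcases le_total (2 * ((p:ℝ) + 1)) n with h1 | h1
      · rw [max_eq_right h1, max_eq_right (by linarith)]
        nlinarith
      · rw [max_eq_left h1]
        rcases max_cases (2 * (p:ℝ)) n with ⟨h, h'⟩ | ⟨h, h'⟩ <;> rw [h]
        · nlinarith
        · nlinarith
end Spec

section Spec2
variable {n : ℕ}

lemma SA_sum_eq {A : Finset (Fin n)} (w : Equiv.Perm (Fin n) → ℝ) (σ : Equiv.Perm (Fin n)) :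
    QA A w σ = ∑ τ, w τ * (if ∀ x, x ∉ A → τ x = σ x then 1 else 0) := by
  unfold QA SA
  simp only [mul_ite, mul_one, mul_zero]
  rw [← Finset.sum_filter]
  refine Finset.sum_bij' (fun g _ => σ * g) (fun g _ => σ⁻¹ * g) ?_ ?_ ?_ ?_ ?_
  · intro g hg
    simp only [Finset.mem_filter, Finset.mem_univ, true_and] at hg ⊢
    intro x hx; rw [Equiv.Perm.mul_apply, hg x hx]
  · intro g hg
    simp only [Finset.mem_filter, Finset.mem_univ, true_and] at hg ⊢
    intro x hx; rw [Equiv.Perm.mul_apply, hg x hx]; simp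
  · intros; simp
  · intros; simp
  · intros; rfl

/-- index set of the degree `j` indicators. -/
abbrev Idx (n j : ℕ) := Σ B : {B : Finset (Fin n) // B.card = j}, (↥B.1 → Fin n)

abbrev EE (n : ℕ) := EuclideanSpace ℝ (Equiv.Perm (Fin n))

def eInd {j : ℕ} (x : Idx n j) : EE n :=
  WithLp.toLp 2 fun σ => if ∀ y : ↥x.1.1, σ y = x.2 y then (1 : ℝ) else 0

def Isp (n j : ℕ) : Submodule ℝ (EE n) := Submodule.span ℝ (Set.range (eInd (n := n) (j := j)))

lemma finrank_Isp (j : ℕ) : Module.finrank ℝ (Isp n j) ≤ n.choose j * n ^ j := by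
  refine (finrank_range_le_card _).trans ?_
  rw [Fintype.card_sigma]
  have : ∀ B : {B : Finset (Fin n) // B.card = j}, Fintype.card (↥B.1 → Fin n) = n ^ j := by
    intro B
    rw [Fintype.card_fun, Fintype.card_fin, Fintype.card_coe, B.2]
  simp only [this, Finset.sum_const, Finset.card_univ, smul_eq_mul]
  rw [Fintype.card_finset_len, Fintype.card_fin]

/-- `ZB univ` as a linear map on Euclidean space. -/
def ZE (n : ℕ) : EE n →ₗ[ℝ] EE n where
  toFun v := WithLp.toLp 2 (ZB Finset.univ v.ofLp)
  map_add' u v := by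
    ext σ; simp [ZB, Finset.sum_add_distrib]
  map_smul' c v := by
    ext σ; simp [ZB, Finset.mul_sum]

lemma ZE_apply (v : EE n) : (ZE n v).ofLp = ZB Finset.univ v.ofLp := rfl

lemma ZE_symm : (ZE n).IsSymmetric := by
  intro u v
  simp only [PiLp.inner_apply, RCLike.inner_apply, conj_trivial, ZE_apply]
  unfold ZB
  simp only [Finset.mul_sum, Finset.sum_mul]
  rw [Finset.sum_comm, Finset.sum_comm (s := Finset.univ (α := Equiv.Perm (Fin n)))]
  refine Finset.sum_congr rfl fun a _ => ?_
  rw [Finset.sum_comm, Finset.sum_comm (s := Finset.univ (α := Equiv.Perm (Fin n)))]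
  refine Finset.sum_congr rfl fun b _ => ?_
  rw [← Equiv.sum_comp (Equiv.mulRight (Equiv.swap a b))]
  refine Finset.sum_congr rfl fun σ _ => ?_
  simp [mul_assoc]

lemma Isp_inv (j : ℕ) {v : EE n} (hv : v ∈ Isp n j) : ZE n v ∈ Isp n j := by
  unfold Isp at hv
  induction hv using Submodule.span_induction with
  | mem x hx =>
    obtain ⟨⟨⟨B, hB⟩, f⟩, rfl⟩ := hx
    have : ZE n (eInd ⟨⟨B, hB⟩, f⟩) = ∑ a : Fin n, ∑ b : Fin n,
        eInd (⟨⟨B.map (Equiv.swap a b).toEmbedding, by simpa using hB⟩, fun y =>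
          f ⟨Equiv.swap a b y, by
            obtain ⟨z, hz, hy⟩ := Finset.mem_map.1 y.2
            rw [← hy]; simpa using hz⟩⟩ : Idx n j) := by
      ext σ
      rw [ZE_apply]
      unfold ZB eInd
      simp only [WithLp.ofLp_sum, Finset.sum_apply]
      refine Finset.sum_congr rfl fun a _ => Finset.sum_congr rfl fun b _ => ?_
      refine if_congr ?_ rfl rfl
      constructor
      · rintro h ⟨y, hy⟩
        obtain ⟨z, hz, hy'⟩ := Finset.mem_map.1 hy
        simp only [Equiv.coe_toEmbedding] at hy'
        subst hy'
        have := h ⟨z, hz⟩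
        simp only [Equiv.Perm.mul_apply] at this
        rw [this]
        simp
      · rintro h ⟨z, hz⟩
        have := h ⟨Equiv.swap a b z, Finset.mem_map.2 ⟨z, hz, rfl⟩⟩
        simp only [Equiv.swap_apply_self] at this
        simpa using this
    rw [this]
    refine Submodule.sum_mem _ fun a _ => Submodule.sum_mem _ fun b _ => ?_
    exact Submodule.subset_span ⟨_, rfl⟩
  | zero => simp
  | add x y _ _ hx hy => rw [map_add]; exact Submodule.add_mem _ hx hy
  | smul c x _ hx => rw [map_smul]; exact Submodule.smul_mem _ _ hx

lemma QA_of_orth {j : ℕ} (hj : j ≤ n) {w : EE n} (hw : w ∈ (Isp n j)ᗮ) (A : Finset (Fin n))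
    (hA : A.card = n - j) : QA A w.ofLp = 0 := by
  funext σ
  rw [SA_sum_eq]
  have hc : (Aᶜ).card = j := by rw [Finset.card_compl, Fintype.card_fin, hA]; omega
  have := (Submodule.mem_orthogonal' _ _).1 hw (eInd (⟨⟨Aᶜ, hc⟩, fun y => σ y⟩ : Idx n j))
    (Submodule.subset_span ⟨_, rfl⟩)
  simp only [PiLp.inner_apply, RCLike.inner_apply, conj_trivial] at this
  refine (Finset.sum_congr rfl fun τ _ => ?_).trans this
  rw [mul_comm (w.ofLp τ)]
  congr 1
  simp [eInd]

/-- the eigenvalue bound off `Isp n j`. -/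
lemma eig_bound (hn : 0 < n) {j : ℕ} (hj : j < n) {v : EE n} {ζ : ℝ} (hv : ZE n v = ζ • v)
    (hvI : v ∉ Isp n j) :
    ζ ≤ (n : ℝ) ^ 2 - ((j : ℝ) + 1) * max (2 * ((n : ℝ) - (j + 1))) (n : ℝ) := by
  obtain ⟨y, hy, z, hz, rfl⟩ := (Isp n j).exists_add_mem_mem_orthogonal v
  have hz0 : z ≠ 0 := by
    rintro rfl
    exact hvI (by simpa using hy)
  have hzZ : ZE n z ∈ (Isp n j)ᗮ := by
    rw [Submodule.mem_orthogonal']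
    intro u hu
    rw [ZE_symm]
    exact (Submodule.mem_orthogonal' _ _).1 hz _ (Isp_inv j hu)
  have key : ZE n z - ζ • z = ζ • y - ZE n y := by
    rw [map_add, smul_add] at hv
    rw [sub_eq_sub_iff_add_eq_add, add_comm, hv, add_comm]

  have h0 : ZE n z - ζ • z = 0 := by
    have h1 : ZE n z - ζ • z ∈ (Isp n j)ᗮ :=
      Submodule.sub_mem _ hzZ (Submodule.smul_mem _ _ hz)
    have h2 : ZE n z - ζ • z ∈ Isp n j := by
      rw [key]
      exact Submodule.sub_mem _ (Submodule.smul_mem _ _ hy) (Isp_inv j hy)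
    have := (Submodule.mem_orthogonal _ _).1 h1 _ h2
    exact inner_self_eq_zero.1 this
  have hZ : ZB Finset.univ z.ofLp = ζ • z.ofLp := by
    rw [← ZE_apply, sub_eq_zero.1 h0]; rfl
  have hz1 : z.ofLp ≠ 0 := by
    intro h
    apply hz0
    ext σ; rw [h]; rfl
  have := layer_all hn hz1 hZ (n - (j + 1)) (by omega) (by
    intro A hA
    exact QA_of_orth hj.le hz A (by omega))
  rw [Nat.cast_sub (by omega)] at this
  push_cast at this
  convert this using 3
  ring

lemma eig_bound0 (hn : 0 < n) {v : EE n} (hv0 : v ≠ 0) {ζ : ℝ} (hv : ZE n v = ζ • v) :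
    ζ ≤ (n : ℝ) ^ 2 := by
  have hz1 : v.ofLp ≠ 0 := by
    intro h
    apply hv0
    ext σ; rw [h]; rfl
  have := layer_all hn hz1 (by rw [← ZE_apply, hv]; rfl) n le_rfl (by
    intro A hA
    have := Finset.card_le_univ A
    simp at this; omega)
  simpa using this

lemma Isp_top {v : EE n} : v ∈ Isp n n := by
  have : v = ∑ τ : Equiv.Perm (Fin n), v τ •
      eInd (⟨⟨Finset.univ, by simp⟩, fun y => τ y⟩ : Idx n n) := by
    ext σ
    simp only [WithLp.ofLp_sum, Finset.sum_apply, WithLp.ofLp_smul, Pi.smul_apply, eInd,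
      smul_eq_mul, mul_ite, mul_one, mul_zero]
    rw [Finset.sum_eq_single σ]
    · simp
    · intro τ _ hτ
      rw [if_neg]
      intro h
      apply hτ
      ext x
      rw [h ⟨x, Finset.mem_univ x⟩]
    · simp
  rw [this]
  exact Submodule.sum_mem _ fun τ _ => Submodule.smul_mem _ _ (Submodule.subset_span ⟨_, rfl⟩)

/-- the per-layer eigenvalue of the averaged projection. -/
def kap (n j : ℕ) : ℝ :=
  1 - (j : ℝ) * max (2 * ((n : ℝ) - j)) (n : ℝ) / (2 * (n : ℝ) ^ 2)

/-- The two-point averaging. -/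
def Pf (p : Fin n × Fin n) : (Equiv.Perm (Fin n) → ℝ) →ₗ[ℝ] (Equiv.Perm (Fin n) → ℝ) where
  toFun u := fun σ => (u σ + u (σ * Equiv.swap p.1 p.2)) / 2
  map_add' u v := by funext σ; simp; ring
  map_smul' c v := by funext σ; simp; ring

def offd (n : ℕ) : Finset (Fin n × Fin n) := Finset.univ.filter fun p => p.1 ≠ p.2

def KK (n : ℕ) : (Equiv.Perm (Fin n) → ℝ) →ₗ[ℝ] (Equiv.Perm (Fin n) → ℝ) :=
  ((n : ℝ) * ((n : ℝ) - 1))⁻¹ • ∑ p ∈ offd n, Pf p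

lemma card_offd : ((offd n).card : ℝ) = (n : ℝ) * ((n : ℝ) - 1) := by
  have : offd n = (Finset.univ : Finset (Fin n)).offDiag := by
    ext p; simp [offd, Finset.mem_offDiag]
  rw [this, Finset.offDiag_card]
  simp
  rw [Nat.cast_sub]
  · push_cast; ring
  · rcases n with _ | n <;> simp

lemma KK_eq (u : Equiv.Perm (Fin n) → ℝ) (hn : 2 ≤ n) (σ) :
    KK n u σ = u σ / 2 + (ZB Finset.univ u σ - n * u σ) / (2 * (n * ((n : ℝ) - 1))) := by
  have hn' : (2 : ℝ) ≤ n := by exact_mod_cast hn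
  have h0 : (n : ℝ) * ((n : ℝ) - 1) ≠ 0 := by
    have : (n:ℝ) - 1 > 0 := by linarith
    positivity
  have h1 : ZB Finset.univ u σ - n * u σ = ∑ p ∈ offd n, u (σ * Equiv.swap p.1 p.2) := by
    unfold ZB offd
    rw [← Finset.sum_product', Finset.univ_product_univ,
      ← Finset.sum_filter_add_sum_filter_not Finset.univ (fun p : Fin n × Fin n => p.1 ≠ p.2)]
    have : ∑ p ∈ (Finset.univ.filter fun p : Fin n × Fin n => ¬ p.1 ≠ p.2),
        u (σ * Equiv.swap p.1 p.2) = n * u σ := by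
      have hc : ∀ p ∈ (Finset.univ.filter fun p : Fin n × Fin n => ¬ p.1 ≠ p.2),
          u (σ * Equiv.swap p.1 p.2) = u σ := by
        intro p hp
        simp at hp
        rw [hp, Equiv.swap_self]; rfl
      rw [Finset.sum_congr rfl hc, Finset.sum_const, nsmul_eq_mul]
      congr 1
      have : (Finset.univ.filter fun p : Fin n × Fin n => ¬ p.1 ≠ p.2) =
          (Finset.univ : Finset (Fin n)).diag := by
        ext p; simp [Finset.mem_diag]
      rw [this, Finset.diag_card]
      simp
    rw [this]; ring
  rw [h1]
  unfold KK
  simp only [LinearMap.smul_apply, LinearMap.sum_apply, Pi.smul_apply, Finset.sum_apply,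
    smul_eq_mul, Pf, LinearMap.coe_mk, AddHom.coe_mk]
  rw [← Finset.sum_div, Finset.sum_add_distrib, Finset.sum_const, nsmul_eq_mul, card_offd]
  have h2 : (n : ℝ) - 1 ≠ 0 := by intro h; rw [h] at h0; simp at h0
  field_simp

lemma Pf_symm (p : Fin n × Fin n) (u w : Equiv.Perm (Fin n) → ℝ) :
    ∑ σ, Pf p u σ * w σ = ∑ σ, u σ * Pf p w σ := by
  have : ∑ σ, u (σ * Equiv.swap p.1 p.2) * w σ = ∑ σ, u σ * w (σ * Equiv.swap p.1 p.2) := by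
    rw [← Equiv.sum_comp (Equiv.mulRight (Equiv.swap p.1 p.2))]
    simp [mul_assoc]
  simp only [Pf, LinearMap.coe_mk, AddHom.coe_mk, add_div, add_mul, mul_add,
    Finset.sum_add_distrib, div_mul_eq_mul_div, mul_div_assoc', ← Finset.sum_div, this]

lemma Pf_idem (p : Fin n × Fin n) (u : Equiv.Perm (Fin n) → ℝ) :
    Pf p (Pf p u) = Pf p u := by
  funext σ
  simp only [Pf, LinearMap.coe_mk, AddHom.coe_mk, mul_assoc, Equiv.swap_mul_self, mul_one]
  ring

lemma ZB_Pf (p : Fin n × Fin n) (u : Equiv.Perm (Fin n) → ℝ) :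
    ZB Finset.univ (Pf p u) = Pf p (ZB Finset.univ u) := by
  funext σ
  simp only [ZB, Pf, LinearMap.coe_mk, AddHom.coe_mk, ← Finset.sum_div, Finset.sum_add_distrib]
  congr 2
  rw [← Equiv.sum_comp (Equiv.swap p.1 p.2)]
  refine Finset.sum_congr rfl fun a _ => ?_
  rw [← Equiv.sum_comp (Equiv.swap p.1 p.2)]
  refine Finset.sum_congr rfl fun b _ => ?_
  rw [mul_assoc, mul_assoc, Equiv.mul_swap_eq_swap_mul (Equiv.swap p.1 p.2) a b]

lemma KK_Pf (hn : 2 ≤ n) (p : Fin n × Fin n) (u : Equiv.Perm (Fin n) → ℝ) :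
    KK n (Pf p u) = Pf p (KK n u) := by
  funext σ
  have h : KK n u = (2⁻¹ : ℝ) • u + ((2 * (n * ((n : ℝ) - 1)))⁻¹ : ℝ) •
      (ZB Finset.univ u - (n:ℝ) • u) := by
    funext τ
    rw [KK_eq u hn, div_eq_mul_inv, div_eq_mul_inv]
    simp only [Pi.add_apply, Pi.smul_apply, Pi.sub_apply, smul_eq_mul]
    ring
  rw [h, KK_eq _ hn, ZB_Pf, div_eq_mul_inv, div_eq_mul_inv]
  simp only [map_add, map_sub, map_smul, Pi.add_apply, Pi.smul_apply, Pi.sub_apply, smul_eq_mul]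
  ring

lemma KKpow_Pf (hn : 2 ≤ n) (s : ℕ) (p : Fin n × Fin n) (u : Equiv.Perm (Fin n) → ℝ) :
    (KK n ^ s) (Pf p u) = Pf p ((KK n ^ s) u) := by
  induction s generalizing u with
  | zero => simp
  | succ s ih => rw [pow_succ, Module.End.mul_apply, KK_Pf hn, ih]; rfl

/-- one averaged step -/
lemma step_quad (hn : 2 ≤ n) (s : ℕ) (u : Equiv.Perm (Fin n) → ℝ) :
    ((n : ℝ) * ((n : ℝ) - 1))⁻¹ * ∑ p ∈ offd n, ∑ σ, (KK n ^ s) (Pf p u) σ * Pf p u σ =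
      ∑ σ, (KK n ^ (s + 1)) u σ * u σ := by
  have h1 : ∀ p, ∑ σ, (KK n ^ s) (Pf p u) σ * Pf p u σ =
      ∑ σ, (KK n ^ s) (Pf p u) σ * u σ := by
    intro p
    rw [← Pf_symm, KKpow_Pf hn, Pf_idem]
  simp only [h1]
  rw [pow_succ, Finset.sum_comm, Finset.mul_sum]
  refine Finset.sum_congr rfl fun σ _ => ?_
  rw [← Finset.sum_mul, ← mul_assoc]
  congr 1
  rw [Module.End.mul_apply]
  have h3 : KK n u = ((n : ℝ) * ((n : ℝ) - 1))⁻¹ • ∑ p ∈ offd n, Pf p u := by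
    simp only [KK, LinearMap.smul_apply, LinearMap.sum_apply]
  rw [h3, map_smul, map_sum, Pi.smul_apply, smul_eq_mul, Finset.sum_apply]

lemma KK_nonneg (hn : 2 ≤ n) (u : Equiv.Perm (Fin n) → ℝ) : 0 ≤ ∑ σ, KK n u σ * u σ := by
  have := step_quad hn 0 u
  simp only [pow_zero, zero_add, pow_one] at this
  rw [← this]
  have hn' : (2 : ℝ) ≤ n := by exact_mod_cast hn
  have h0 : 0 < (n : ℝ) * ((n : ℝ) - 1) := by
    have : (n:ℝ) - 1 > 0 := by linarith
    positivity
  refine mul_nonneg (by positivity) (Finset.sum_nonneg fun p _ => Finset.sum_nonneg fun σ _ => ?_)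
  exact mul_self_nonneg _

def dlt (g : Equiv.Perm (Fin n)) : Equiv.Perm (Fin n) → ℝ := fun σ => if σ = g then 1 else 0

lemma KK_trans (g : Equiv.Perm (Fin n)) (u : Equiv.Perm (Fin n) → ℝ) :
    KK n (fun σ => u (g * σ)) = fun σ => KK n u (g * σ) := by
  funext σ
  simp [KK, Pf, mul_assoc]

lemma KKpow_trans (g : Equiv.Perm (Fin n)) (s : ℕ) (u : Equiv.Perm (Fin n) → ℝ) :
    (KK n ^ s) (fun σ => u (g * σ)) = fun σ => (KK n ^ s) u (g * σ) := by
  induction s generalizing u with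
  | zero => simp
  | succ s ih => rw [pow_succ, Module.End.mul_apply, KK_trans, ih]; rfl

theorem return_bound (hn : 2 ≤ n) (T : ℕ) :
    (n.factorial : ℝ) * (KK n ^ T) (dlt 1) 1 ≤
      ∑ j ∈ Finset.range (n + 1), ((n.choose j * n ^ j : ℕ) : ℝ) * kap n j ^ T := by
  classical
  have hn' : (2 : ℝ) ≤ n := by exact_mod_cast hn
  have h0 : 0 < (n : ℝ) * ((n : ℝ) - 1) := by
    have : (n:ℝ) - 1 > 0 := by linarith
    positivity
  have hfr : Module.finrank ℝ (EE n) = Fintype.card (Equiv.Perm (Fin n)) := by simp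
  set b := (ZE_symm (n := n)).eigenvectorBasis hfr with hb
  set ev := (ZE_symm (n := n)).eigenvalues hfr with hev
  have hbe : ∀ i, ZE n (b i) = ev i • b i := fun i =>
    (ZE_symm (n := n)).apply_eigenvectorBasis hfr i
  set κ : Fin (Fintype.card (Equiv.Perm (Fin n))) → ℝ := fun i =>
    1 / 2 + (ev i - n) / (2 * (n * ((n : ℝ) - 1))) with hκ
  have hK : ∀ i, KK n (b i).ofLp = κ i • (b i).ofLp := by
    intro i
    funext σ
    rw [KK_eq _ hn, ← ZE_apply, hbe]
    simp [hκ]; ring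
  have hKp : ∀ i, (KK n ^ T) (b i).ofLp = κ i ^ T • (b i).ofLp := by
    intro i
    induction T with
    | zero => simp
    | succ s ih => rw [pow_succ, Module.End.mul_apply, hK, map_smul, ih, smul_smul, pow_succ]
                   congr 1; ring
  have hnorm : ∀ i, ∑ σ, (b i).ofLp σ * (b i).ofLp σ = 1 := by
    intro i
    have := inner_self_eq_one_of_norm_eq_one (𝕜 := ℝ) (b.norm_eq_one i)
    rw [PiLp.inner_apply] at this
    simpa only [RCLike.inner_apply, conj_trivial] using this
  have hκ0 : ∀ i, 0 ≤ κ i := by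
    intro i
    have := KK_nonneg hn (b i).ofLp
    rw [hK] at this
    simp only [Pi.smul_apply, smul_eq_mul, mul_assoc] at this
    rwa [← Finset.mul_sum, hnorm, mul_one] at this
  -- trace
  have hdelta : ∀ g, (dlt g : Equiv.Perm (Fin n) → ℝ) = ∑ i, (b i).ofLp g • (b i).ofLp := by
    intro g
    have := b.sum_repr' (WithLp.toLp 2 (dlt g))
    have h2 := congrArg WithLp.ofLp this
    simp only [WithLp.ofLp_sum, WithLp.ofLp_smul] at h2
    rw [← h2]
    refine Finset.sum_congr rfl fun i _ => ?_
    congr 1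
    simp [PiLp.inner_apply, dlt]
  have htr : ∀ g, (KK n ^ T) (dlt g) g = ∑ i, κ i ^ T * ((b i).ofLp g * (b i).ofLp g) := by
    intro g
    rw [hdelta g, map_sum, Finset.sum_apply]
    refine Finset.sum_congr rfl fun i _ => ?_
    rw [map_smul, hKp]
    simp; ring
  have hshift : ∀ g, (KK n ^ T) (dlt g) g = (KK n ^ T) (dlt 1) 1 := by
    intro g
    have : (dlt g : Equiv.Perm (Fin n) → ℝ) = fun σ => dlt 1 (g⁻¹ * σ) := by
      funext σ
      simp only [dlt]
      refine if_congr ?_ rfl rfl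
      rw [inv_mul_eq_one, eq_comm]
    rw [this, KKpow_trans]
    simp
  have htrace : (n.factorial : ℝ) * (KK n ^ T) (dlt 1) 1 = ∑ i, κ i ^ T := by
    have h1 : ∑ g : Equiv.Perm (Fin n), (KK n ^ T) (dlt g) g =
        (n.factorial : ℝ) * (KK n ^ T) (dlt 1) 1 := by
      simp only [hshift, Finset.sum_const, nsmul_eq_mul, Finset.card_univ, Fintype.card_perm,
        Fintype.card_fin]
    rw [← h1]
    simp only [htr]
    rw [Finset.sum_comm]
    refine Finset.sum_congr rfl fun i _ => ?_
    rw [← Finset.mul_sum, hnorm, mul_one]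
  rw [htrace]
  have hex : ∀ i, ∃ j, b i ∈ Isp n j := fun i => ⟨n, Isp_top⟩
  let J : Fin (Fintype.card (Equiv.Perm (Fin n))) → ℕ := fun i => Nat.find (hex i)
  have hJn : ∀ i, J i ≤ n := fun i => Nat.find_min' (hex i) Isp_top
  have hJm : ∀ i, b i ∈ Isp n (J i) := fun i => Nat.find_spec (hex i)
  have hκJ : ∀ i, κ i ≤ kap n (J i) := by
    intro i
    have key : ev i ≤ (n : ℝ) ^ 2 - (J i : ℝ) * max (2 * ((n : ℝ) - J i)) (n : ℝ) := by
      rcases hJ : J i with _ | j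
      · have := eig_bound0 (by omega) (b.orthonormal.ne_zero i) (hbe i)
        simpa using this
      · have hnot : b i ∉ Isp n j := Nat.find_min (hex i) (show j < J i by omega)
        have := eig_bound (by omega) (by have := hJn i; omega) (hbe i) hnot
        push_cast
        exact this
    set m := (J i : ℝ) * max (2 * ((n : ℝ) - J i)) (n : ℝ) with hm
    have hm0 : 0 ≤ m := by
      rw [hm]; exact mul_nonneg (by positivity) (le_max_of_le_right (by positivity))
    have h1 : κ i ≤ 1 / 2 + ((n : ℝ) ^ 2 - m - n) / (2 * (n * ((n : ℝ) - 1))) := by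
      rw [hκ]; simp only
      gcongr
    have h2 : 1 / 2 + ((n : ℝ) ^ 2 - m - n) / (2 * (n * ((n : ℝ) - 1))) =
        1 - m / (2 * (n * ((n : ℝ) - 1))) := by
      have : (n:ℝ) - 1 ≠ 0 := by intro h; rw [h] at h0; simp at h0
      field_simp; ring
    rw [h2] at h1
    refine h1.trans ?_
    unfold kap
    rw [← hm]
    gcongr
    nlinarith
  have hcount : ∀ j, ((Finset.univ.filter fun i => J i = j).card : ℝ) ≤
      ((n.choose j * n ^ j : ℕ) : ℝ) := by
    intro j
    have hl : LinearIndependent ℝ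
        (fun i : {i // J i = j} => (⟨b i.1, by have := hJm i.1; rwa [i.2] at this⟩ : Isp n j)) := by
      apply LinearIndependent.of_comp (Isp n j).subtype
      exact b.orthonormal.linearIndependent.comp _ Subtype.val_injective
    have := hl.fintype_card_le_finrank
    rw [Fintype.card_subtype] at this
    exact_mod_cast this.trans (finrank_Isp j)
  calc ∑ i, κ i ^ T ≤ ∑ i, kap n (J i) ^ T :=
        Finset.sum_le_sum fun i _ => pow_le_pow_left₀ (hκ0 i) (hκJ i) T
    _ = ∑ j ∈ Finset.range (n + 1), ∑ i ∈ Finset.univ.filter (fun i => J i = j),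
          kap n (J i) ^ T := by
        rw [Finset.sum_fiberwise_of_maps_to]
        intro i _
        exact Finset.mem_range.2 (Nat.lt_succ_of_le (hJn i))
    _ = ∑ j ∈ Finset.range (n + 1),
          ((Finset.univ.filter fun i => J i = j).card : ℝ) * kap n j ^ T := by
        refine Finset.sum_congr rfl fun j _ => ?_
        rw [Finset.sum_congr rfl (fun i hi => by rw [(Finset.mem_filter.1 hi).2]),
          Finset.sum_const, nsmul_eq_mul]
    _ ≤ _ := by
        refine Finset.sum_le_sum fun j hj => ?_
        rcases Finset.eq_empty_or_nonempty (Finset.univ.filter fun i => J i = j) with h | ⟨i, hi⟩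
        · have hk : 0 ≤ kap n j := by
            have hjn : (j:ℝ) ≤ n := by exact_mod_cast Nat.lt_succ_iff.1 (Finset.mem_range.1 hj)
            unfold kap
            rw [sub_nonneg, div_le_one (by positivity)]
            have hj0 : (0:ℝ) ≤ j := by positivity
            rcases max_cases (2 * ((n : ℝ) - j)) (n:ℝ) with ⟨h, _⟩ | ⟨h, _⟩ <;> rw [h] <;>
              nlinarith [sq_nonneg ((n:ℝ) - j)]
          rw [h]; simp
          positivity
        · have hk : 0 ≤ kap n j := by
            have := (hκ0 i).trans (hκJ i)
            rwa [(Finset.mem_filter.1 hi).2] at this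
          exact mul_le_mul_of_nonneg_right (hcount j) (pow_nonneg hk T)

end Spec2

section Numeric

lemma term_bound {n T j : ℕ} (hn : 10 ≤ n) {κ : ℝ} (hκ : 12 ≤ κ)
    (hT : (T : ℝ) = n * (3 * Real.log n + κ)) (hj : 1 ≤ j) (hjn : j ≤ n)  :
    ((n.choose j * n ^ j : ℕ) : ℝ) * kap n j ^ T ≤ Real.exp (j * (1 - κ / 2)) := by
  have hn0 : (0 : ℝ) < n := by positivity
  have hj0 : (0 : ℝ) < j := by positivity
  have hjn' : (j : ℝ) ≤ n := by exact_mod_cast hjn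
  set L := Real.log n with hL
  have hL0 : 0 ≤ L := Real.log_natCast_nonneg n
  have hL3 : 2 * Real.log 3 ≤ L := by
    have : (2 : ℝ) * Real.log 3 = Real.log (3 ^ 2) := by rw [Real.log_pow]; norm_num
    rw [this]
    apply Real.log_le_log (by norm_num)
    have : (10 : ℝ) ≤ n := by exact_mod_cast hn
    linarith
  -- combinatorial part
  have h1 : ((n.choose j * n ^ j : ℕ) : ℝ) ≤ Real.exp (j * (2 * L - Real.log j + 1)) := by
    have ha : (n.choose j : ℝ) ≤ (n : ℝ) ^ j / j.factorial := Nat.choose_le_pow_div j n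
    have hb : (j : ℝ) ^ j / j.factorial ≤ Real.exp j :=
      Real.pow_div_factorial_le_exp j (by positivity) j
    have hexpn : Real.exp (j * L) = (n : ℝ) ^ j := by
      rw [Real.exp_nat_mul, hL, Real.exp_log hn0]
    have hexpj : Real.exp (j * Real.log j) = (j : ℝ) ^ j := by
      rw [Real.exp_nat_mul, Real.exp_log hj0]
    have hE : Real.exp (j * (2 * L - Real.log j + 1)) =
        (n : ℝ) ^ j * (n : ℝ) ^ j * Real.exp j / (j : ℝ) ^ j := by
      rw [← hexpn, ← hexpj, ← Real.exp_add, ← Real.exp_add, ← Real.exp_sub]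
      congr 1; ring
    rw [hE]
    push_cast
    calc (n.choose j : ℝ) * (n : ℝ) ^ j ≤ (n : ℝ) ^ j / j.factorial * (n : ℝ) ^ j := by gcongr
      _ ≤ _ := by
        have hf : (0 : ℝ) < j.factorial := by positivity
        have hp : (0 : ℝ) < (j : ℝ) ^ j := by positivity
        rw [div_le_iff₀ hf] at hb
        rw [div_mul_eq_mul_div, div_le_div_iff₀ hf hp]
        have : 0 ≤ (n : ℝ) ^ j * (n : ℝ) ^ j := by positivity
        nlinarith
  -- spectral part
  set m := max (2 * ((n : ℝ) - j)) (n : ℝ) with hm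
  have hmn : (n : ℝ) ≤ m := le_max_right _ _
  have hm2 : 2 * ((n : ℝ) - j) ≤ m := le_max_left _ _
  have hk0 : 0 ≤ kap n j := by
    unfold kap
    rw [sub_nonneg, div_le_one (by positivity)]
    rcases max_cases (2 * ((n : ℝ) - j)) (n:ℝ) with ⟨h, _⟩ | ⟨h, _⟩ <;> rw [h] <;>
      nlinarith [sq_nonneg ((n:ℝ) - j)]
  have h2 : kap n j ^ T ≤ Real.exp (-((3 * L + κ) * (j * m / (2 * n)))) := by
    have : kap n j ≤ Real.exp (-((j : ℝ) * m / (2 * (n : ℝ) ^ 2))) := by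
      have := Real.add_one_le_exp (-((j : ℝ) * m / (2 * (n : ℝ) ^ 2)))
      unfold kap; rw [← hm]; linarith
    calc kap n j ^ T ≤ Real.exp (-((j : ℝ) * m / (2 * (n : ℝ) ^ 2))) ^ T :=
          pow_le_pow_left₀ hk0 this T
      _ = _ := by
        rw [← Real.exp_nat_mul, hT]
        congr 1
        field_simp
  calc ((n.choose j * n ^ j : ℕ) : ℝ) * kap n j ^ T
      ≤ Real.exp (j * (2 * L - Real.log j + 1)) * Real.exp (-((3 * L + κ) * (j * m / (2 * n)))) :=
        mul_le_mul h1 h2 (pow_nonneg hk0 T) (Real.exp_pos _).le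
    _ ≤ _ := by
      rw [← Real.exp_add]
      apply Real.exp_le_exp.2
      have hx : (1 : ℝ) ≤ m / n := by rw [le_div_iff₀ hn0]; linarith
      have key : 2 * L - Real.log j - 3 * L * (m / n) / 2 ≤ 0 := by
        by_cases h3 : (3 : ℝ) * j ≤ n
        · have : (4 : ℝ) / 3 ≤ m / n := by rw [le_div_iff₀ hn0]; linarith
          have hlj : 0 ≤ Real.log j := Real.log_natCast_nonneg j
          nlinarith
        · have hlj : L - Real.log 3 ≤ Real.log j := by
            rw [hL, ← Real.log_div hn0.ne' (by norm_num)]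
            apply Real.log_le_log (by positivity)
            rw [div_le_iff₀ (by norm_num)]; linarith
          nlinarith
      have : (3 * L + κ) * (j * m / (2 * n)) = j * (3 * L * (m / n) / 2 + κ * (m / n) / 2) := by
        field_simp
      rw [this, ← sub_eq_add_neg, ← mul_sub]
      apply mul_le_mul_of_nonneg_left _ hj0.le
      nlinarith

lemma S_bound {n T : ℕ} (hn : 10 ≤ n) {κ : ℝ} (hκ : 12 ≤ κ)
    (hT : (T : ℝ) = n * (3 * Real.log n + κ)) :
    ∑ j ∈ Finset.range (n + 1), ((n.choose j * n ^ j : ℕ) : ℝ) * kap n j ^ T ≤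
      1 + Real.exp (-κ / 3) := by
  have hgeo : ∀ m : ℕ, ∑ j ∈ Finset.range m, ((1 : ℝ) / 2) ^ (j + 1) ≤ 1 := by
    intro m
    have : ∑ j ∈ Finset.range m, ((1 : ℝ) / 2) ^ (j + 1) = 1 - (1 / 2) ^ m := by
      induction m with
      | zero => simp
      | succ m ih => rw [Finset.sum_range_succ, ih]; ring
    rw [this]; linarith [show (0:ℝ) ≤ (1 / 2) ^ m by positivity]
  rw [Finset.sum_range_succ']
  have h0 : ((n.choose 0 * n ^ 0 : ℕ) : ℝ) * kap n 0 ^ T = 1 := by simp [kap]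
  rw [h0, add_comm]
  gcongr
  calc _ ≤ ∑ j ∈ Finset.range n, Real.exp (-κ / 3) * ((1 : ℝ) / 2) ^ (j + 1) := by
        refine Finset.sum_le_sum fun j hj => ?_
        refine (term_bound hn hκ hT (by omega) (by have := Finset.mem_range.1 hj; omega)).trans ?_
        have he : Real.exp (-1) ≤ 1 / 2 := by
          rw [Real.exp_neg, one_div]
          apply inv_anti₀ (by norm_num)
          linarith [Real.add_one_le_exp 1]
        calc _ ≤ Real.exp (-κ / 3 + ((j + 1 : ℕ) : ℝ) * (-1)) := by
              apply Real.exp_le_exp.2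
              push_cast
              have : (0 : ℝ) ≤ j := by positivity
              nlinarith
          _ = Real.exp (-κ / 3) * Real.exp (-1) ^ (j + 1) := by
              rw [Real.exp_add, Real.exp_nat_mul]
          _ ≤ _ := by gcongr
    _ ≤ Real.exp (-κ / 3) := by
        rw [← Finset.mul_sum]
        have := hgeo n
        nlinarith [Real.exp_pos (-κ / 3)]

end Numeric

section Quenched

/-- the law of a random subproduct of the `gp (f t)`. -/
def vT {n : ℕ} {G : Type*} [Group G] [DecidableEq G] (gp : Fin n × Fin n → G) :
    (T : ℕ) → (Fin T → Fin n × Fin n) → G → ℝ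
  | 0, _, g => if g = 1 then 1 else 0
  | T + 1, f, g => (vT gp T (fun t => f t.castSucc) g +
      vT gp T (fun t => f t.castSucc) (g * gp (f (Fin.last T)))) / 2

section vTfacts
variable {n : ℕ} {G : Type*} [Group G] [DecidableEq G] (gp : Fin n × Fin n → G)

lemma vT_nonneg (T : ℕ) (f : Fin T → Fin n × Fin n) (g : G) : 0 ≤ vT gp T f g := by
  induction T generalizing g with
  | zero => simp only [vT]; split_ifs <;> norm_num
  | succ T ih =>
    simp only [vT]
    have h1 := ih (fun t => f t.castSucc) g
    have h2 := ih (fun t => f t.castSucc) (g * gp (f (Fin.last T)))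
    positivity

lemma vT_sum [Fintype G] (T : ℕ) (f : Fin T → Fin n × Fin n) : ∑ g, vT gp T f g = 1 := by
  induction T with
  | zero => simp [vT]
  | succ T ih =>
    simp only [vT]
    have h := Equiv.sum_comp (Equiv.mulRight (gp (f (Fin.last T))))
      (vT gp T (fun t => f t.castSucc))
    simp only [Equiv.coe_mulRight] at h
    rw [← Finset.sum_div, Finset.sum_add_distrib, h, ih]
    norm_num

end vTfacts

variable {n : ℕ}

def gsw (p : Fin n × Fin n) : Equiv.Perm (Fin n) := Equiv.swap p.1 p.2

lemma vT_succ_Pf (T : ℕ) (f : Fin (T + 1) → Fin n × Fin n) :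
    vT gsw (T + 1) f = Pf (f (Fin.last T)) (vT gsw T (fun t => f t.castSucc)) := rfl

lemma pairUniform_eq (d : ℕ) : pairUniform d =
    ((d * (d - 1) : ℕ) : ℝ≥0∞)⁻¹ • ∑ p ∈ offd d, Measure.dirac p := by
  unfold pairUniform
  congr 1
  refine Measure.ext_of_singleton fun p => ?_
  rw [Measure.restrict_apply (measurableSet_singleton p), Measure.coe_finsetSum, Finset.sum_apply]
  simp only [Measure.dirac_apply, Set.indicator_apply, Set.mem_singleton_iff, Pi.one_apply,
    Finset.sum_ite_eq', offd, Finset.mem_filter, Finset.mem_univ, true_and]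
  by_cases hp : p.1 = p.2
  · have : {p} ∩ {p : Fin d × Fin d | p.1 ≠ p.2} = ∅ := by
      ext x; simp; rintro rfl; exact hp
    rw [this]; simp [hp]
  · have : {p} ∩ {p : Fin d × Fin d | p.1 ≠ p.2} = {p} := by
      ext x; simp; rintro rfl; exact hp
    rw [this]; simp [hp]

lemma integral_pair (d : ℕ) (hd : 2 ≤ d) (φ : Fin d × Fin d → ℝ) :
    ∫ p, φ p ∂(pairUniform d) = ((d : ℝ) * ((d : ℝ) - 1))⁻¹ * ∑ p ∈ offd d, φ p := by
  rw [pairUniform_eq, integral_smul_measure, integral_finsetSum_measure]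
  · simp only [integral_dirac, smul_eq_mul]
    congr 1
    rw [ENNReal.toReal_inv]
    congr 1
    rw [ENNReal.toReal_natCast, Nat.cast_mul, Nat.cast_sub (by omega)]
    simp
  · intro i _
    exact integrable_dirac (by simp)

instance pairUniform_prob {d : ℕ} [Fact (2 ≤ d)] : IsProbabilityMeasure (pairUniform d) := by
  have hd : 2 ≤ d := Fact.out
  constructor
  rw [pairUniform_eq, Measure.smul_apply, Measure.coe_finsetSum, Finset.sum_apply]
  simp only [measure_univ, Finset.sum_const, nsmul_eq_mul, mul_one, smul_eq_mul]
  have : (offd d).card = d * (d - 1) := by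
    have h := card_offd (n := d)
    have h2 : ((d * (d - 1) : ℕ) : ℝ) = d * ((d : ℝ) - 1) := by
      rw [Nat.cast_mul, Nat.cast_sub (by omega)]; simp
    rw [← h2] at h
    exact_mod_cast h
  rw [this]
  apply ENNReal.inv_mul_cancel
  · have : d * (d - 1) ≠ 0 := Nat.mul_ne_zero (by omega) (by omega)
    exact_mod_cast this
  · exact ENNReal.natCast_ne_top _

lemma pi_succ {X : Type*} [MeasurableSpace X] (μ : Measure X) [IsProbabilityMeasure μ] (T : ℕ) :
    Measure.map (fun ω : Fin (T + 1) → X => ((fun t : Fin T => ω t.castSucc), ω (Fin.last T)))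
      (Measure.pi fun _ : Fin (T + 1) => μ) = (Measure.pi fun _ : Fin T => μ).prod μ := by
  have h := (measurePreserving_piFinSuccAbove (fun _ : Fin (T + 1) => μ) (Fin.last T)).map_eq
  rw [← Measure.prod_swap, ← h, Measure.map_map measurable_swap
    (MeasurableEquiv.measurable _)]
  congr 1
  funext ω
  simp [MeasurableEquiv.piFinSuccAbove]
  rfl

lemma int_succ {X : Type*} [MeasurableSpace X] (μ : Measure X) [IsProbabilityMeasure μ] (T : ℕ)
    (F : (Fin T → X) → X → ℝ) (hF : Integrable (Function.uncurry F)
      ((Measure.pi fun _ : Fin T => μ).prod μ)) :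
    ∫ ω, F (fun t : Fin T => ω t.castSucc) (ω (Fin.last T)) ∂(Measure.pi fun _ : Fin (T + 1) => μ)
      = ∫ ω, ∫ x, F ω x ∂μ ∂(Measure.pi fun _ : Fin T => μ) := by
  have h := integral_prod (f := Function.uncurry F) hF
  simp only [Function.uncurry_apply_pair] at h
  rw [← h, ← pi_succ μ T, integral_map]
  · rfl
  · fun_prop
  · rw [pi_succ]; exact hF.aestronglyMeasurable

lemma quad_exp (hn : 2 ≤ n) (T s : ℕ) :
    ∫ f, ∑ σ, (KK n ^ s) (vT gsw T f) σ * vT gsw T f σ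
      ∂(Measure.pi fun _ : Fin T => pairUniform n) = (KK n ^ (s + T)) (dlt 1) 1 := by
  have : Fact (2 ≤ n) := ⟨hn⟩
  induction T generalizing s with
  | zero =>
    have : ∀ f : Fin 0 → Fin n × Fin n, vT (gsw (n := n)) 0 f = dlt 1 := by
      intro f; funext g; simp [vT, dlt]
    simp only [this]
    rw [integral_const]
    simp [dlt]
  | succ T ih =>
    have h := int_succ (pairUniform n) T
      (fun f p => ∑ σ, (KK n ^ s) (Pf p (vT gsw T f)) σ * Pf p (vT gsw T f) σ)
      (Integrable.of_finite)
    simp only [vT_succ_Pf]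
    rw [h]
    simp only [integral_pair n hn, step_quad hn]
    rw [ih (s + 1), show s + 1 + T = s + (T + 1) by ring]

def WW (T : ℕ) (f : Fin T → Fin n × Fin n) : ℝ :=
  (n.factorial : ℝ) * ∑ σ, vT gsw T f σ ^ 2 - 1

lemma WW_bound {T : ℕ} (hn : 10 ≤ n) {κ : ℝ} (hκ : 12 ≤ κ)
    (hT : (T : ℝ) = n * (3 * Real.log n + κ)) :
    ∫ f, WW (n := n) T f ∂(Measure.pi fun _ : Fin T => pairUniform n) ≤ Real.exp (-κ / 3) := by
  have : Fact (2 ≤ n) := ⟨by omega⟩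
  unfold WW
  rw [integral_sub Integrable.of_finite Integrable.of_finite, integral_const_mul]
  have := quad_exp (n := n) (by omega) T 0
  simp only [pow_zero, Module.End.one_apply, zero_add, ← pow_two] at this
  rw [this, integral_const]
  have h1 := return_bound (n := n) (by omega) T
  have h2 := S_bound hn hκ hT
  simp
  linarith

lemma WW_dev {T : ℕ} (f : Fin T → Fin n × Fin n) {t : ℝ} (ht : 0 < t)
    (H : Equiv.Perm (Fin n) → ℝ) (hH : ∀ σ, 0 ≤ H σ ∧ H σ ≤ 1) :
    |∑ σ, vT gsw T f σ * H σ - (n.factorial : ℝ)⁻¹ * ∑ σ, H σ| ≤ (WW T f / t + t) / 2 := by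
  set N : ℝ := (n.factorial : ℝ) with hN
  have hN0 : 0 < N := by positivity
  set v := vT (gsw (n := n)) T f with hv
  have hcard : ((Finset.univ : Finset (Equiv.Perm (Fin n))).card : ℝ) = N := by
    rw [Finset.card_univ, Fintype.card_perm, Fintype.card_fin]
  set x := ∑ σ, |v σ - N⁻¹| with hx
  have h1 : |∑ σ, v σ * H σ - N⁻¹ * ∑ σ, H σ| ≤ x := by
    rw [Finset.mul_sum, ← Finset.sum_sub_distrib]
    refine (Finset.abs_sum_le_sum_abs _ _).trans (Finset.sum_le_sum fun σ _ => ?_)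
    rw [← sub_mul, abs_mul, abs_of_nonneg (hH σ).1]
    exact mul_le_of_le_one_right (abs_nonneg _) (hH σ).2
  have h2 : x ^ 2 ≤ WW T f := by
    have := sq_sum_le_card_mul_sum_sq (s := (Finset.univ : Finset (Equiv.Perm (Fin n))))
      (f := fun σ => |v σ - N⁻¹|)
    rw [hcard] at this
    refine this.trans (le_of_eq ?_)
    simp only [sq_abs, sub_sq, Finset.sum_add_distrib, Finset.sum_sub_distrib]
    rw [← Finset.sum_mul, ← Finset.mul_sum, hv, vT_sum, Finset.sum_const, nsmul_eq_mul, hcard, WW,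
      ← hN]
    field_simp
    ring
  refine h1.trans ?_
  have h3 : x ≤ (x ^ 2 / t + t) / 2 := by
    rw [le_div_iff₀ two_pos, ← sub_nonneg]
    have : x ^ 2 / t + t - x * 2 = (x - t) ^ 2 / t := by field_simp; ring
    rw [this]; positivity
  refine h3.trans ?_
  gcongr

end Quenched

section Algebra
variable {n : ℕ}

/-- signed permutation matrix `e_j ↦ s_{σ j} e_{σ j}`. -/
def SP (s : Fin n → ℤˣ) (σ : Equiv.Perm (Fin n)) : Matrix (Fin n) (Fin n) ℝ :=
  Matrix.of fun i j => if σ j = i then ((s i : ℤ) : ℝ) else 0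

lemma SP_mul_apply (s : Fin n → ℤˣ) (σ : Equiv.Perm (Fin n)) (B : Matrix (Fin n) (Fin n) ℝ) (i j) :
    (SP s σ * B) (σ i) j = ((s (σ i) : ℤ) : ℝ) * B i j := by
  rw [Matrix.mul_apply, Finset.sum_eq_single i]
  · simp [SP]
  · intro b _ hb
    simp [SP, hb]
  · simp

lemma mul_SP_apply (s : Fin n → ℤˣ) (σ : Equiv.Perm (Fin n)) (B : Matrix (Fin n) (Fin n) ℝ) (i j) :
    (B * SP s σ) i j = B i (σ j) * ((s (σ j) : ℤ) : ℝ) := by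
  rw [Matrix.mul_apply, Finset.sum_eq_single (σ j)]
  · simp [SP]
  · intro b _ hb
    simp [SP, hb.symm]
  · simp

lemma SP_mul (s t : Fin n → ℤˣ) (σ τ : Equiv.Perm (Fin n)) :
    SP s σ * SP t τ = SP (s * fun i => t (σ⁻¹ i)) (σ * τ) := by
  ext i j
  obtain ⟨i, rfl⟩ := σ.surjective i
  rw [SP_mul_apply]
  simp [SP]

lemma SP_one_one : SP (1 : Fin n → ℤˣ) 1 = 1 := by
  ext i j
  simp [SP, Matrix.one_apply, eq_comm]

lemma SP_one_eq (s : Fin n → ℤˣ) : SP s 1 = Matrix.diagonal fun i => ((s i : ℤ) : ℝ) := by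
  ext i j
  by_cases h : i = j
  · subst h; simp [SP]
  · simp [SP, h, Ne.symm h]

lemma SP_one_mul (s t : Fin n → ℤˣ) (τ : Equiv.Perm (Fin n)) : SP s 1 * SP t τ = SP (s * t) τ := by
  rw [SP_mul]; simp

lemma rotM_mul_apply {i j : Fin n} (hij : i ≠ j) (θ : ℝ) (B : Matrix (Fin n) (Fin n) ℝ) (k l) :
    (rotM n i j θ * B) k l = if k = i then Real.cos θ * B i l - Real.sin θ * B j l
      else if k = j then Real.sin θ * B i l + Real.cos θ * B j l else B k l := by
  rw [Matrix.mul_apply]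
  split_ifs with h1 h2
  · subst h1
    rw [Finset.sum_eq_add k j hij]
    · simp [rotM, hij, hij.symm]; ring
    · rintro c _ ⟨h1, h2⟩
      simp [rotM, h1, h2, hij, Ne.symm h1]
    · simp
    · simp
  · subst h2
    rw [Finset.sum_eq_add i k hij]
    · simp [rotM, hij, hij.symm]
    · rintro c _ ⟨h1, h2⟩
      simp [rotM, h1, h2, hij, hij.symm, Ne.symm h2]
    · simp
    · simp
  · rw [Finset.sum_eq_single k]
    · simp [rotM, h1, h2]
    · intro c _ hc
      simp [rotM, h1, h2, Ne.symm hc]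
    · simp

lemma rotM_add {i j : Fin n} (hij : i ≠ j) (α β : ℝ) :
    rotM n i j α * rotM n i j β = rotM n i j (α + β) := by
  ext k l
  rw [rotM_mul_apply hij]
  by_cases h1 : k = i <;> by_cases h2 : k = j <;> by_cases h3 : l = i <;> by_cases h4 : l = j <;>
    simp_all [rotM, Real.cos_add, Real.sin_add, hij.symm, eq_comm] <;> ring

lemma SP_rotM {i j : Fin n} (hij : i ≠ j) (s : Fin n → ℤˣ) (σ : Equiv.Perm (Fin n)) (θ : ℝ) :
    SP s σ * rotM n i j θ =
      rotM n (σ i) (σ j) (((s (σ i) * s (σ j) : ℤˣ) : ℤ) * θ) * SP s σ := by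
  have hu : ∀ e : ℤˣ, ((e : ℤ) : ℝ) * ((e : ℤ) : ℝ) = 1 := by
    intro e
    rcases Int.units_eq_one_or e with h | h <;> simp [h]
  have hc : ∀ e : ℤˣ, Real.cos (((e : ℤ) : ℝ) * θ) = Real.cos θ := by
    intro e
    rcases Int.units_eq_one_or e with h | h <;> simp [h]
  have hsn : ∀ e : ℤˣ, Real.sin (((e : ℤ) : ℝ) * θ) = ((e : ℤ) : ℝ) * Real.sin θ := by
    intro e
    rcases Int.units_eq_one_or e with h | h <;> simp [h]
  have hconj : ∀ φ k l, rotM n (σ i) (σ j) φ (σ k) (σ l) = rotM n i j φ k l := by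
    intro φ k l
    simp [rotM]
  ext k l
  obtain ⟨k, rfl⟩ := σ.surjective k
  rw [SP_mul_apply, mul_SP_apply, hconj]
  simp only [rotM, Matrix.of_apply, hc, hsn]
  have h1 := hu (s (σ i))
  have h2 := hu (s (σ j))
  push_cast
  split_ifs with a1 a2 a3 a4 a5
  · rw [a1.1, a1.2]; ring
  · rw [a2.1, a2.2]; linear_combination (((s (σ i) : ℤ) : ℝ) * Real.sin θ) * h2
  · rw [a3.1, a3.2]; linear_combination -(((s (σ j) : ℤ) : ℝ) * Real.sin θ) * h1
  · rw [a4.1, a4.2]; ring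
  · rw [a5]; ring
  · ring

lemma rotM_mod2pi (i j : Fin n) (x : ℝ) : rotM n i j (mod2pi x) = rotM n i j x := by
  have h : mod2pi x = x - (⌊x / (2 * Real.pi)⌋ : ℤ) * (2 * Real.pi) := by
    unfold mod2pi
    rw [Int.fract]
    field_simp
  unfold rotM
  rw [h, Real.cos_sub_int_mul_two_pi, Real.sin_sub_int_mul_two_pi]

lemma rotM_half_pi {i j : Fin n} (hij : i ≠ j) :
    rotM n i j (Real.pi / 2) = SP (Pi.mulSingle i (-1)) (Equiv.swap i j) := by
  ext k l
  by_cases h1 : k = i <;> by_cases h2 : k = j <;> by_cases h3 : l = i <;> by_cases h4 : l = j <;>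
    simp_all [rotM, SP, hij.symm, Equiv.swap_apply_of_ne_of_ne, Pi.mulSingle_apply, eq_comm]
  
/-- sign flip of two coordinates. -/
def gfl (p : Fin n × Fin n) : Fin n → ℤˣ := Pi.mulSingle p.1 (-1) * Pi.mulSingle p.2 (-1)

lemma rotM_pi {i j : Fin n} (hij : i ≠ j) : rotM n i j Real.pi = SP (gfl (i, j)) 1 := by
  ext k l
  by_cases h1 : k = i <;> by_cases h2 : k = j <;> by_cases h3 : l = i <;> by_cases h4 : l = j <;>
    simp_all [rotM, SP, gfl, hij.symm, Pi.mulSingle_apply, eq_comm]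

/-- even sign vectors -/
def Ev (n : ℕ) : Finset (Fin n → ℤˣ) := Finset.univ.filter fun s => ∏ i, s i = 1

lemma mem_Ev {s : Fin n → ℤˣ} : s ∈ Ev n ↔ ∏ i, s i = 1 := by simp [Ev]

lemma prod_gfl (p : Fin n × Fin n) : ∏ i, gfl p i = 1 := by
  simp [gfl, Finset.prod_mul_distrib, Finset.prod_pi_mulSingle]

/-- determinant one lift of a permutation. -/
def liftS (i0 : Fin n) (τ : Equiv.Perm (Fin n)) : Fin n → ℤˣ :=
  Pi.mulSingle i0 (Equiv.Perm.sign τ)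

lemma prod_liftS (i0 : Fin n) (τ : Equiv.Perm (Fin n)) :
    ∏ i, liftS i0 τ i = Equiv.Perm.sign τ := by
  simp [liftS, Finset.prod_pi_mulSingle]

lemma lift_step (i0 : Fin n) (g : Equiv.Perm (Fin n)) (p : Fin n × Fin n) (hp : p.1 ≠ p.2) :
    ∃ ξ ∈ Ev n, SP (liftS i0 (g * gsw p)) (g * gsw p) =
      SP ξ 1 * (SP (liftS i0 g) g * rotM n p.1 p.2 (Real.pi / 2)) := by
  rw [rotM_half_pi hp, SP_mul]
  set s' := liftS i0 g * fun i => (Pi.mulSingle p.1 (-1) : Fin n → ℤˣ) (g⁻¹ i) with hs'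
  refine ⟨liftS i0 (g * gsw p) * s'⁻¹, ?_, ?_⟩
  · rw [mem_Ev]
    have h1 : ∏ i, s' i = Equiv.Perm.sign (g * gsw p) := by
      rw [hs']
      simp only [Pi.mul_apply]
      rw [Finset.prod_mul_distrib, prod_liftS,
        Equiv.prod_comp g⁻¹ (Pi.mulSingle p.1 (-1) : Fin n → ℤˣ),
        Equiv.Perm.sign_mul, gsw, Equiv.Perm.sign_swap hp]
      simp
    simp only [Pi.mul_apply, Pi.inv_apply]
    rw [Finset.prod_mul_distrib, prod_liftS, Finset.prod_inv_distrib, h1]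
    exact mul_inv_cancel _
  · rw [SP_one_mul]
    simp [gsw]

lemma SP_det (s : Fin n → ℤˣ) (σ : Equiv.Perm (Fin n)) :
    (SP s σ).det = (((∏ i, s i) * Equiv.Perm.sign σ : ℤˣ) : ℤ) := by
  have h : SP s σ = SP s 1 * SP 1 σ := by rw [SP_one_mul]; simp
  rw [h, Matrix.det_mul, SP_one_eq, Matrix.det_diagonal]
  have h2 : SP (1 : Fin n → ℤˣ) σ = (σ⁻¹).permMatrix ℝ := by
    ext i j
    simp [SP, Equiv.Perm.permMatrix, PEquiv.toMatrix_apply, Equiv.eq_symm_apply, eq_comm]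
  rw [h2, Matrix.det_permutation]
  simp

end Algebra

section MeasurePart

lemma measurable_entry {m n : Type*} (i : m) (j : n) :
    Measurable (fun M : Matrix m n ℝ => M i j) :=
  (measurable_pi_apply j).comp (measurable_pi_apply (X := fun _ : m => n → ℝ) i)

lemma measurable_of_entries {α m n : Type*} [MeasurableSpace α] {F : α → Matrix m n ℝ}
    (h : ∀ i j, Measurable fun a => F a i j) : Measurable F :=
  measurable_pi_iff.2 fun i => measurable_pi_iff.2 fun j => h i j

lemma Measurable.matMul {α : Type*} {n : ℕ} [MeasurableSpace α]
    {F H : α → Matrix (Fin n) (Fin n) ℝ} (hF : Measurable F) (hH : Measurable H) :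
    Measurable fun a => F a * H a := by
  refine measurable_of_entries fun i j => ?_
  simp only [Matrix.mul_apply]
  exact Finset.measurable_sum _ fun k _ =>
    ((measurable_entry i k).comp hF).mul ((measurable_entry k j).comp hH)

def Rx {d : ℕ} (x : (Fin d × Fin d) × ℝ) : Matrix (Fin d) (Fin d) ℝ := rotM d x.1.1 x.1.2 x.2

lemma measurable_rotM {d : ℕ} (i j : Fin d) : Measurable (rotM d i j) := by
  refine measurable_of_entries fun k l => ?_
  simp only [rotM, Matrix.of_apply]
  split_ifs <;> fun_prop

lemma measurable_Rx {d : ℕ} : Measurable (Rx (d := d)) :=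
  measurable_from_prod_countable_right fun p => measurable_rotM p.1 p.2

lemma kac_succ {d T : ℕ} (ω : Fin (T + 1) → (Fin d × Fin d) × ℝ) :
    kacMatrix ω = Rx (ω (Fin.last T)) * kacMatrix (fun t : Fin T => ω t.castSucc) := by
  unfold kacMatrix
  rw [List.ofFn_succ', List.concat_eq_append, List.reverse_append]
  simp [Rx]

lemma kac_zero {d : ℕ} (ω : Fin 0 → (Fin d × Fin d) × ℝ) : kacMatrix ω = 1 := by
  simp [kacMatrix]

lemma measurable_kac {d T : ℕ} : Measurable (kacMatrix (d := d) (T := T)) := by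
  induction T with
  | zero =>
    have : kacMatrix (d := d) (T := 0) = fun _ => 1 := by funext ω; exact kac_zero ω
    rw [this]; exact measurable_const
  | succ T ih =>
    have : kacMatrix (d := d) (T := T + 1) = fun ω => Rx (ω (Fin.last T)) *
        kacMatrix (fun t : Fin T => ω t.castSucc) := by funext ω; exact kac_succ ω
    rw [this]
    exact Measurable.matMul (measurable_Rx.comp (measurable_pi_apply _)) (ih.comp (by fun_prop))

def Good {d : ℕ} (Φ : Matrix (Fin d) (Fin d) ℝ → ℝ) : Prop :=
  Measurable Φ ∧ ∀ M, 0 ≤ Φ M ∧ Φ M ≤ 1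

lemma Good.abs {d : ℕ} {Φ : Matrix (Fin d) (Fin d) ℝ → ℝ} (h : Good Φ) (M) : ‖Φ M‖ ≤ 1 := by
  rw [Real.norm_eq_abs, abs_of_nonneg (h.2 M).1]; exact (h.2 M).2

lemma Good.integrable {d : ℕ} {Φ : Matrix (Fin d) (Fin d) ℝ → ℝ} (h : Good Φ) {α : Type*}
    [MeasurableSpace α] (μ : Measure α) [IsFiniteMeasure μ] {F : α → Matrix (Fin d) (Fin d) ℝ}
    (hF : Measurable F) : Integrable (fun a => Φ (F a)) μ :=
  Integrable.of_bound (h.1.comp hF).aestronglyMeasurable 1 (ae_of_all _ fun a => h.abs _)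

lemma Good.comp_left {d : ℕ} {Φ : Matrix (Fin d) (Fin d) ℝ → ℝ} (h : Good Φ)
    (A : Matrix (Fin d) (Fin d) ℝ) : Good fun M => Φ (A * M) :=
  ⟨h.1.comp (Measurable.matMul measurable_const measurable_id), fun M => h.2 _⟩

lemma Good.comp_right {d : ℕ} {Φ : Matrix (Fin d) (Fin d) ℝ → ℝ} (h : Good Φ)
    (A : Matrix (Fin d) (Fin d) ℝ) : Good fun M => Φ (M * A) :=
  ⟨h.1.comp (Measurable.matMul measurable_id measurable_const), fun M => h.2 _⟩

variable {d : ℕ} [Fact (2 ≤ d)] {q : Measure ℝ} [IsProbabilityMeasure q]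

instance qKac_prob : IsProbabilityMeasure (qKacParam d q) := by
  unfold qKacParam; infer_instance

lemma step_formula {F : (Fin d × Fin d) × ℝ → ℝ} (hF : Integrable F (qKacParam d q)) :
    ∫ x, F x ∂(qKacParam d q) =
      ((d : ℝ) * ((d : ℝ) - 1))⁻¹ * ∑ p ∈ offd d, ∫ θ, F (p, θ) ∂q := by
  unfold qKacParam at hF ⊢
  rw [integral_prod _ hF, integral_pair d Fact.out]

def Eop (q : Measure ℝ) (Φ : Matrix (Fin d) (Fin d) ℝ → ℝ) (M : Matrix (Fin d) (Fin d) ℝ) : ℝ :=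
  ∫ x, Φ (Rx x * M) ∂(qKacParam d q)

lemma Eop_good {Φ : Matrix (Fin d) (Fin d) ℝ → ℝ} (h : Good Φ) : Good (Eop q Φ) := by
  refine ⟨?_, fun M => ⟨integral_nonneg fun x => (h.2 _).1, ?_⟩⟩
  · have : StronglyMeasurable (Function.uncurry
        fun (M : Matrix (Fin d) (Fin d) ℝ) (x : (Fin d × Fin d) × ℝ) => Φ (Rx x * M)) :=
      (h.1.comp (Measurable.matMul (measurable_Rx.comp measurable_snd)
        measurable_fst)).stronglyMeasurable
    exact (this.integral_prod_right (ν := qKacParam d q)).measurable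
  · have h1 : Integrable (fun x => Φ (Rx x * M)) (qKacParam d q) :=
      h.integrable _ (Measurable.matMul measurable_Rx measurable_const)
    calc Eop q Φ M ≤ ∫ x, (1 : ℝ) ∂(qKacParam d q) :=
          integral_mono h1 (integrable_const _) fun x => (h.2 _).2
      _ = 1 := by simp

lemma int_neg (hq1 : Measure.map (fun θ => mod2pi (-θ)) q = q) {Φ : Matrix (Fin d) (Fin d) ℝ → ℝ}
    (h : Good Φ) (i j : Fin d) (M) (e : ℤˣ) :
    ∫ θ, Φ (rotM d i j (((e : ℤ) : ℝ) * θ) * M) ∂q = ∫ θ, Φ (rotM d i j θ * M) ∂q := by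
  have hmod : Measurable mod2pi := by
    unfold mod2pi
    fun_prop
  rcases Int.units_eq_one_or e with he | he
  · simp [he]
  · conv_rhs => rw [← hq1]
    rw [integral_map]
    · simp [he, rotM_mod2pi]
    · exact (hmod.comp measurable_neg).aemeasurable
    · exact (h.1.comp (Measurable.matMul (measurable_rotM i j)
        measurable_const)).aestronglyMeasurable

lemma Eop_SP (hq1 : Measure.map (fun θ => mod2pi (-θ)) q = q)
    {Φ : Matrix (Fin d) (Fin d) ℝ → ℝ} (h : Good Φ) (s : Fin d → ℤˣ) (σ : Equiv.Perm (Fin d)) (M) :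
    ∫ x, Φ (SP s σ * (Rx x * M)) ∂(qKacParam d q) = Eop q Φ (SP s σ * M) := by
  unfold Eop
  rw [step_formula (h.integrable _ (Measurable.matMul measurable_const
      (Measurable.matMul measurable_Rx measurable_const))),
    step_formula (h.integrable _ (Measurable.matMul measurable_Rx measurable_const))]
  congr 1
  refine Finset.sum_equiv (Equiv.prodCongr σ σ) ?_ ?_
  · intro p; simp [offd]
  · intro p hp
    have hp' : p.1 ≠ p.2 := by simpa [offd] using hp
    simp only [Rx, Equiv.prodCongr_apply, Prod.map_fst, Prod.map_snd]
    rw [← int_neg hq1 h _ _ _ (s (σ p.1) * s (σ p.2))]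
    refine integral_congr_ae (ae_of_all _ fun θ => ?_)
    simp only
    rw [← mul_assoc, SP_rotM hp', mul_assoc]

/-- invariance of the angle law under adding `α`. -/
def QInv (d : ℕ) (q : Measure ℝ) (α : ℝ) : Prop :=
  ∀ Φ : Matrix (Fin d) (Fin d) ℝ → ℝ, Good Φ → ∀ i j : Fin d, i ≠ j → ∀ M,
    ∫ θ, Φ (rotM d i j α * (rotM d i j θ * M)) ∂q = ∫ θ, Φ (rotM d i j θ * M) ∂q

lemma QInv_half (hq2 : Measure.map (fun θ => mod2pi (θ + Real.pi / 2)) q = q) :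
    QInv d q (Real.pi / 2) := by
  intro Φ h i j hij M
  have hmod : Measurable mod2pi := by
    unfold mod2pi
    fun_prop
  conv_rhs => rw [← hq2]
  rw [integral_map]
  · refine integral_congr_ae (ae_of_all _ fun θ => ?_)
    simp only
    rw [rotM_mod2pi, ← mul_assoc, rotM_add hij, add_comm]
  · exact (hmod.comp (measurable_id.add_const _)).aemeasurable
  · exact (h.1.comp (Measurable.matMul (measurable_rotM i j)
      measurable_const)).aestronglyMeasurable

lemma QInv_pi (hq2 : Measure.map (fun θ => mod2pi (θ + Real.pi / 2)) q = q) :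
    QInv d q Real.pi := by
  intro Φ h i j hij M
  have h2 := QInv_half (d := d) hq2
  rw [← h2 Φ h i j hij M, ← h2 _ (h.comp_left (rotM d i j (Real.pi / 2))) i j hij M]
  refine integral_congr_ae (ae_of_all _ fun θ => ?_)
  simp only
  rw [← mul_assoc (rotM d i j (Real.pi / 2)), rotM_add hij, add_halves]

def fpair {d T : ℕ} (ω : Fin T → (Fin d × Fin d) × ℝ) : Fin T → Fin d × Fin d := fun t => (ω t).1

lemma measurable_fpair {d T : ℕ} : Measurable (fpair (d := d) (T := T)) := by
  unfold fpair; fun_prop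

lemma measurable_fun_fpair {d T : ℕ} (φ : (Fin T → Fin d × Fin d) → ℝ) :
    Measurable (fun ω => φ (fpair (d := d) (T := T) ω)) :=
  (measurable_of_finite φ).comp measurable_fpair

abbrev nuT (d T : ℕ) (q : Measure ℝ) : Measure (Fin T → (Fin d × Fin d) × ℝ) :=
  Measure.pi fun _ : Fin T => qKacParam d q

lemma kac_int_succ {T : ℕ} {Φ : Matrix (Fin d) (Fin d) ℝ → ℝ} (h : Good Φ) :
    ∫ ω, Φ (kacMatrix ω) ∂(nuT d (T + 1) q) = ∫ ω, Eop q Φ (kacMatrix ω) ∂(nuT d T q) := by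
  simp only [kac_succ]
  refine int_succ (qKacParam d q) T (fun ω x => Φ (Rx x * kacMatrix ω)) ?_
  exact h.integrable _ (Measurable.matMul (measurable_Rx.comp measurable_snd)
    (measurable_kac.comp measurable_fst))

theorem quenched {G : Type*} [Group G] [DecidableEq G] [Fintype G] (gp : Fin d × Fin d → G)
    (hgp : ∀ p, gp p * gp p = 1) (α : ℝ) (Ξ : Set (Fin d → ℤˣ))
    (s : G → Fin d → ℤˣ) (σ : G → Equiv.Perm (Fin d)) (h1 : SP (s 1) (σ 1) = 1)
    (hstep : ∀ g p, p.1 ≠ p.2 → ∃ ξ ∈ Ξ, SP (s (g * gp p)) (σ (g * gp p)) =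
      SP ξ 1 * (SP (s g) (σ g) * rotM d p.1 p.2 α))
    (hq1 : Measure.map (fun θ => mod2pi (-θ)) q = q) (hα : QInv d q α) (T : ℕ)
    {Φ : Matrix (Fin d) (Fin d) ℝ → ℝ} (h : Good Φ) (hΦ : ∀ ξ ∈ Ξ, ∀ M, Φ (SP ξ 1 * M) = Φ M) :
    ∫ ω, Φ (kacMatrix ω) ∂(nuT d T q) =
      ∫ ω, ∑ g, vT gp T (fpair ω) g * Φ (SP (s g) (σ g) * kacMatrix ω) ∂(nuT d T q) := by
  induction T generalizing Φ with
  | zero =>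
    refine integral_congr_ae (ae_of_all _ fun ω => ?_)
    simp [vT, h1]
  | succ T ih =>
    have hE : Good (Eop q Φ) := Eop_good h
    have hEΦ : ∀ ξ ∈ Ξ, ∀ M, Eop q Φ (SP ξ 1 * M) = Eop q Φ M := by
      intro ξ hξ M
      rw [← Eop_SP hq1 h]
      simp only [hΦ ξ hξ]
      rfl
    rw [kac_int_succ h, ih hE hEΦ]
    simp only [kac_succ]
    have key := int_succ (qKacParam d q) T (fun ω x =>
      ∑ g, (vT gp T (fpair ω) g + vT gp T (fpair ω) (g * gp x.1)) / 2 *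
        Φ (SP (s g) (σ g) * (Rx x * kacMatrix ω))) ?_
    · refine Eq.trans ?_ key.symm
      refine integral_congr_ae (ae_of_all _ fun ω => ?_)
      simp only
      have hIntA : ∀ g (w : Fin d × Fin d → ℝ), Integrable (fun x => w x.1 *
          Φ (SP (s g) (σ g) * (Rx x * kacMatrix ω))) (qKacParam d q) := by
        intro g w
        have hm : Measurable fun x : (Fin d × Fin d) × ℝ => w x.1 :=
          (measurable_of_finite w).comp measurable_fst
        refine Integrable.of_bound (hm.mul (h.1.comp (Measurable.matMul measurable_const
          (Measurable.matMul measurable_Rx measurable_const)))).aestronglyMeasurable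
          (∑ p, |w p|) (ae_of_all _ fun x => ?_)
        rw [norm_mul]
        calc _ ≤ ‖w x.1‖ * 1 := by gcongr; exact h.abs _
          _ ≤ _ := by
            rw [mul_one]
            exact Finset.single_le_sum (f := fun p => |w p|) (fun p _ => abs_nonneg _)
              (Finset.mem_univ x.1)
      have hIntB : ∀ g p, Integrable (fun θ =>
          Φ (SP (s g) (σ g) * (Rx (p, θ) * kacMatrix ω))) q := by
        intro g p
        exact h.integrable _ (Measurable.matMul measurable_const
          (Measurable.matMul (measurable_rotM p.1 p.2) measurable_const))
      simp only [← Eop_SP hq1 h]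
      set v := vT gp T (fpair ω) with hv
      rw [step_formula (integrable_finsetSum _ fun g _ =>
        hIntA g fun p => (v g + v (g * gp p)) / 2)]
      have hL : ∀ g, v g * ∫ x, Φ (SP (s g) (σ g) * (Rx x * kacMatrix ω)) ∂(qKacParam d q) =
          ((d : ℝ) * ((d : ℝ) - 1))⁻¹ * ∑ p ∈ offd d, v g *
            ∫ θ, Φ (SP (s g) (σ g) * (Rx (p, θ) * kacMatrix ω)) ∂q := by
        intro g
        rw [step_formula (by simpa using hIntA g fun _ => 1), ← Finset.mul_sum]
        ring
      simp only [hL]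
      rw [← Finset.mul_sum, Finset.sum_comm]
      congr 1
      refine Finset.sum_congr rfl fun p hp => ?_
      have hp' : p.1 ≠ p.2 := by simpa [offd] using hp
      rw [integral_finsetSum _ fun g _ => (hIntB g p).const_mul _]
      simp only [integral_const_mul]
      set Y : G → ℝ := fun g => ∫ θ, Φ (SP (s g) (σ g) * (Rx (p, θ) * kacMatrix ω)) ∂q with hY
      have hYs : ∀ g, Y (g * gp p) = Y g := by
        intro g
        obtain ⟨ξ, hξ, he⟩ := hstep g p hp'
        simp only [hY, he, Rx]
        rw [← hα _ (h.comp_left (SP (s g) (σ g))) p.1 p.2 hp']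
        refine integral_congr_ae (ae_of_all _ fun θ => ?_)
        simp only
        rw [mul_assoc, hΦ ξ hξ, mul_assoc]
      have e1 := Equiv.sum_comp (Equiv.mulRight (gp p)) fun g => v (g * gp p) * Y g
      simp only [Equiv.coe_mulRight, mul_assoc, hgp, mul_one, hYs] at e1
      simp only [add_div, add_mul, Finset.sum_add_distrib]
      simp only [div_mul_eq_mul_div, ← Finset.sum_div]
      rw [← e1]
      ring
    · refine integrable_finsetSum _ fun g _ => ?_
      have hm : Measurable (fun z : (Fin T → (Fin d × Fin d) × ℝ) × ((Fin d × Fin d) × ℝ) =>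
          (vT gp T (fpair z.1) g + vT gp T (fpair z.1) (g * gp z.2.1)) / 2) := by
        have : Measurable (fun y : (Fin T → Fin d × Fin d) × (Fin d × Fin d) =>
          (vT gp T y.1 g + vT gp T y.1 (g * gp y.2)) / 2) := measurable_of_finite _
        exact this.comp ((measurable_fpair.comp measurable_fst).prodMk
          (measurable_fst.comp measurable_snd))
      refine Integrable.of_bound (hm.mul (h.1.comp (Measurable.matMul measurable_const
          (Measurable.matMul (measurable_Rx.comp measurable_snd)
            (measurable_kac.comp measurable_fst))))).aestronglyMeasurable 1
          (ae_of_all _ fun z => ?_)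
      rw [norm_mul]
      have hv1 : ∀ f g, vT gp T f g ≤ 1 := by
        intro f g
        rw [← vT_sum gp T f]
        exact Finset.single_le_sum (fun g _ => vT_nonneg gp T f g) (Finset.mem_univ g)
      have ha : ‖(vT gp T (fpair z.1) g + vT gp T (fpair z.1) (g * gp z.2.1)) / 2‖ ≤ 1 := by
        have a1 := vT_nonneg gp T (fpair z.1) g
        have a2 := vT_nonneg gp T (fpair z.1) (g * gp z.2.1)
        rw [Real.norm_eq_abs, abs_of_nonneg (by positivity)]
        linarith [hv1 (fpair z.1) g, hv1 (fpair z.1) (g * gp z.2.1)]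
      exact mul_le_one₀ ha (norm_nonneg _) (h.abs _)

end MeasurePart

section Signs
variable {n : ℕ}

def Conn {T : ℕ} (f : Fin T → Fin n × Fin n) : Prop :=
  ∀ S : Finset (Fin n), S.Nonempty → S ≠ Finset.univ → ∃ t, ¬ ((f t).1 ∈ S ↔ (f t).2 ∈ S)

lemma units_sq_fun (g : Fin n → ℤˣ) : g * g = 1 := by
  funext i
  simp

lemma gfl_sq (p : Fin n × Fin n) : gfl p * gfl p = 1 := units_sq_fun _

lemma vT_gfl_inv (T : ℕ) (f : Fin T → Fin n × Fin n) (t : Fin T) (g : Fin n → ℤˣ) :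
    vT gfl T f (g * gfl (f t)) = vT gfl T f g := by
  induction T generalizing g with
  | zero => exact t.elim0
  | succ T ih =>
    simp only [vT]
    refine Fin.lastCases ?_ (fun t => ?_) t
    · rw [mul_assoc, gfl_sq, mul_one, add_comm]
    · have h := ih (fun t => f t.castSucc) t
      rw [h g, mul_right_comm, h]

lemma vT_gfl_supp (T : ℕ) (f : Fin T → Fin n × Fin n) (g : Fin n → ℤˣ) (hg : g ∉ Ev n) :
    vT gfl T f g = 0 := by
  rw [mem_Ev] at hg
  induction T generalizing g with
  | zero =>
    simp only [vT]
    rw [if_neg]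
    rintro rfl
    simp at hg
  | succ T ih =>
    simp only [vT]
    rw [ih _ _ hg, ih]
    · simp
    · simp only [Pi.mul_apply]
      rw [Finset.prod_mul_distrib, prod_gfl, mul_one]
      exact hg

lemma vT_conn {T : ℕ} {f : Fin T → Fin n × Fin n} (i0 : Fin n) (hf : Conn f) (g : Fin n → ℤˣ) :
    vT gfl T f g = if g ∈ Ev n then ((Ev n).card : ℝ)⁻¹ else 0 := by
  classical
  set v := vT (gfl (n := n)) T f with hv
  have hR : ∀ i, ∀ g, v (g * gfl (i0, i)) = v g := by
    by_contra hcon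
    push Not at hcon
    obtain ⟨i1, hi1⟩ := hcon
    let S : Finset (Fin n) := Finset.univ.filter fun i => ∀ g, v (g * gfl (i0, i)) = v g
    have hmem : ∀ i, i ∈ S ↔ ∀ g, v (g * gfl (i0, i)) = v g := by intro i; simp [S]
    have h0 : i0 ∈ S := by
      rw [hmem]; intro g
      have : gfl (i0, i0) = (1 : Fin n → ℤˣ) := units_sq_fun _
      rw [this, mul_one]
    have h1 : S ≠ Finset.univ := by
      intro h
      have : i1 ∈ S := by rw [h]; exact Finset.mem_univ _
      rw [hmem] at this
      obtain ⟨g, hg⟩ := hi1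
      exact hg (this g)
    obtain ⟨t, ht⟩ := hf S ⟨i0, h0⟩ h1
    apply ht
    have e1 : ∀ a b : Fin n, gfl (i0, b) = (gfl (i0, a) * gfl (a, b) : Fin n → ℤˣ) := by
      intro a b
      simp only [gfl]
      have := units_sq_fun (Pi.mulSingle a (-1) : Fin n → ℤˣ)
      calc (Pi.mulSingle i0 (-1) * Pi.mulSingle b (-1) : Fin n → ℤˣ)
          = Pi.mulSingle i0 (-1) * (Pi.mulSingle a (-1) * Pi.mulSingle a (-1)) *
              Pi.mulSingle b (-1) := by rw [this, mul_one]
        _ = _ := by simp only [mul_assoc]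
    have hinv := vT_gfl_inv T f t
    rw [← hv] at hinv
    have hsym : gfl ((f t).2, (f t).1) = gfl (f t) := by simp only [gfl]; exact mul_comm _ _
    constructor
    · intro h
      rw [hmem] at h ⊢
      intro g
      rw [e1 (f t).1, ← mul_assoc]
      exact (hinv _).trans (h g)
    · intro h
      rw [hmem] at h ⊢
      intro g
      rw [e1 (f t).2, ← mul_assoc, hsym]
      exact (hinv _).trans (h g)
  have hR' : ∀ i (e : ℤˣ) g, v (g * (Pi.mulSingle i0 e * Pi.mulSingle i e)) = v g := by
    intro i e g
    rcases Int.units_eq_one_or e with he | he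
    · simp [he]
    · rw [he]; exact hR i g
  have hconst : ∀ g ∈ Ev n, v g = v 1 := by
    intro g hg
    rw [mem_Ev] at hg
    have h1 : ∀ A : Finset (Fin n),
        v (∏ i ∈ A, (Pi.mulSingle i0 (g i) * Pi.mulSingle i (g i))) = v 1 := by
      intro A
      induction A using Finset.induction_on with
      | empty => simp
      | insert a A ha ih =>
        rw [Finset.prod_insert ha, mul_comm, hR', ih]
    have h2 : ∏ i, (Pi.mulSingle i0 (g i) * Pi.mulSingle i (g i)) = g := by
      rw [Finset.prod_mul_distrib, Finset.univ_prod_mulSingle]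
      have h3 := map_prod (MonoidHom.mulSingle (fun _ : Fin n => ℤˣ) i0) g Finset.univ
      simp only [MonoidHom.mulSingle_apply] at h3
      rw [← h3, hg]; simp
    rw [← h1 Finset.univ, h2]
  have hsum : ((Ev n).card : ℝ) * v 1 = 1 := by
    rw [← vT_sum gfl T f, ← hv, ← nsmul_eq_mul, ← Finset.sum_const]
    rw [← Finset.sum_subset (Finset.subset_univ (Ev n))]
    · exact Finset.sum_congr rfl fun g hg => (hconst g hg).symm
    · intro g _ hg; exact vT_gfl_supp T f g hg
  split_ifs with hg
  · rw [hconst g hg]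
    exact eq_inv_of_mul_eq_one_right hsum
  · exact vT_gfl_supp T f g hg

lemma uncross_prob [Fact (2 ≤ n)] (S : Finset (Fin n)) (hS : 2 * S.card ≤ n) :
    (pairUniform n).real {p | p.1 ∈ S ↔ p.2 ∈ S} ≤ Real.exp (-(S.card : ℝ) / ((n : ℝ) - 1)) := by
  classical
  have hn : 2 ≤ n := Fact.out
  have hn' : (2 : ℝ) ≤ n := by exact_mod_cast hn
  have hn1 : (0 : ℝ) < (n : ℝ) - 1 := by linarith
  have h1 : (pairUniform n).real {p | p.1 ∈ S ↔ p.2 ∈ S} =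
      ∫ p, (1 - ((if p.1 ∈ S then 1 else 0) * (if p.2 ∈ Sᶜ then 1 else 0) +
        (if p.1 ∈ Sᶜ then 1 else 0) * (if p.2 ∈ S then 1 else 0) : ℝ)) ∂(pairUniform n) := by
    rw [← integral_indicator_one (Set.toFinite _).measurableSet]
    refine integral_congr_ae (ae_of_all _ fun p => ?_)
    by_cases a : p.1 ∈ S <;> by_cases b : p.2 ∈ S <;> simp [Set.indicator, a, b]
  rw [h1, integral_pair n hn, Finset.sum_sub_distrib, Finset.sum_const, nsmul_eq_mul, card_offd,
    mul_one]
  have h2 : ∑ p ∈ offd n, ((if p.1 ∈ S then 1 else 0) * (if p.2 ∈ Sᶜ then 1 else 0) +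
        (if p.1 ∈ Sᶜ then 1 else 0) * (if p.2 ∈ S then 1 else 0) : ℝ) =
        2 * (S.card : ℝ) * ((n : ℝ) - S.card) := by
    rw [Finset.sum_subset (Finset.subset_univ (offd n))]
    · rw [Finset.sum_add_distrib, Fintype.sum_prod_type, Fintype.sum_prod_type]
      have hms : ∀ a b : Fin n → ℝ, ∑ x, ∑ y, a x * b y = (∑ x, a x) * ∑ y, b y :=
        fun a b => (Finset.sum_mul_sum Finset.univ Finset.univ a b).symm
      rw [hms (fun x => if x ∈ S then 1 else 0) (fun y => if y ∈ Sᶜ then 1 else 0),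
        hms (fun x => if x ∈ Sᶜ then 1 else 0) (fun y => if y ∈ S then 1 else 0)]
      simp only [Finset.sum_ite_mem, Finset.univ_inter, Finset.sum_const, nsmul_eq_mul, mul_one,
        Finset.card_compl, Fintype.card_fin]
      rw [Nat.cast_sub (by omega)]
      ring
    · intro p _ hp
      have : p.1 = p.2 := by simpa [offd] using hp
      by_cases a : p.2 ∈ S <;> simp [this, a]
  rw [h2]
  have h3 := Real.add_one_le_exp (-(S.card : ℝ) / ((n : ℝ) - 1))
  refine le_trans ?_ h3
  have hk : 2 * (S.card : ℝ) ≤ n := by exact_mod_cast hS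
  have hk0 : (0 : ℝ) ≤ S.card := by positivity
  rw [mul_sub, inv_mul_cancel₀ (by positivity)]
  have : (S.card : ℝ) / ((n : ℝ) - 1) ≤
      ((n : ℝ) * ((n : ℝ) - 1))⁻¹ * (2 * (S.card : ℝ) * ((n : ℝ) - S.card)) := by
    rw [inv_mul_eq_div, div_le_div_iff₀ hn1 (by positivity)]
    nlinarith [mul_nonneg hk0 hn1.le]
  rw [neg_div]
  linarith

lemma disc_prob [Fact (2 ≤ n)] (T : ℕ)
    (hε : (n : ℝ) * Real.exp (-(T : ℝ) / ((n : ℝ) - 1)) < 1) :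
    (Measure.pi fun _ : Fin T => pairUniform n).real {f | ¬ Conn f} ≤
      (n : ℝ) * Real.exp (-(T : ℝ) / ((n : ℝ) - 1)) /
        (1 - (n : ℝ) * Real.exp (-(T : ℝ) / ((n : ℝ) - 1))) := by
  classical
  set x := Real.exp (-(T : ℝ) / ((n : ℝ) - 1)) with hx
  have hx0 : 0 < x := Real.exp_pos _
  let 𝒮 : Finset (Finset (Fin n)) :=
    Finset.univ.filter fun S => S.Nonempty ∧ 2 * S.card ≤ n
  have hsub : {f : Fin T → Fin n × Fin n | ¬ Conn f} ⊆
      ⋃ S ∈ 𝒮, Set.univ.pi fun _ => {p : Fin n × Fin n | p.1 ∈ S ↔ p.2 ∈ S} := by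
    intro f hf
    simp only [Conn, Set.mem_ofPred_eq] at hf
    push Not at hf
    obtain ⟨S, hS, hS1, hc⟩ := hf
    simp only [Set.mem_iUnion]
    by_cases h : 2 * S.card ≤ n
    · refine ⟨S, by simp [𝒮, hS, h], fun t _ => ?_⟩
      have := hc t
      simp only [Set.mem_ofPred_eq]
      tauto
    · refine ⟨Sᶜ, ?_, fun t _ => ?_⟩
      · simp only [𝒮, Finset.mem_filter, Finset.mem_univ, true_and, Finset.card_compl,
          Fintype.card_fin]
        refine ⟨?_, by omega⟩
        rw [Finset.nonempty_iff_ne_empty]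
        intro h0
        exact hS1 ((Finset.compl_eq_empty_iff S).1 h0)
      · have := hc t
        simp only [Set.mem_ofPred_eq, Finset.mem_compl]
        tauto
  have hone : ∀ S ∈ 𝒮, (Measure.pi fun _ : Fin T => pairUniform n).real
      (Set.univ.pi fun _ => {p : Fin n × Fin n | p.1 ∈ S ↔ p.2 ∈ S}) ≤ x ^ S.card := by
    intro S hS
    have hS2 : 2 * S.card ≤ n := (Finset.mem_filter.1 hS).2.2
    rw [measureReal_def, Measure.pi_pi, Finset.prod_const, Finset.card_univ, Fintype.card_fin,
      ENNReal.toReal_pow, ← measureReal_def]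
    calc _ ≤ Real.exp (-(S.card : ℝ) / ((n : ℝ) - 1)) ^ T := by
          gcongr; exact uncross_prob S hS2
      _ = x ^ S.card := by
          rw [hx, ← Real.exp_nat_mul, ← Real.exp_nat_mul]
          congr 1; ring
  have hbin : ∑ S : Finset (Fin n), x ^ S.card = (1 + x) ^ n := by
    have := Finset.sum_pow_mul_eq_add_pow x 1 (Finset.univ : Finset (Fin n))
    simp only [one_pow, mul_one, Finset.powerset_univ, Finset.card_univ, Fintype.card_fin] at this
    rw [this, add_comm]
  have hlt : ∑ S ∈ 𝒮, x ^ S.card ≤ (1 + x) ^ n - 1 := by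
    rw [← hbin]
    have : ∑ S ∈ insert ∅ 𝒮, x ^ S.card ≤ ∑ S : Finset (Fin n), x ^ S.card :=
      Finset.sum_le_sum_of_subset_of_nonneg (Finset.subset_univ _) fun _ _ _ => by positivity
    rw [Finset.sum_insert (by simp [𝒮])] at this
    simp at this
    linarith
  calc _ ≤ (Measure.pi fun _ : Fin T => pairUniform n).real
        (⋃ S ∈ 𝒮, Set.univ.pi fun _ => {p : Fin n × Fin n | p.1 ∈ S ↔ p.2 ∈ S}) :=
        measureReal_mono hsub (measure_ne_top _ _)
    _ ≤ ∑ S ∈ 𝒮, (Measure.pi fun _ : Fin T => pairUniform n).real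
        (Set.univ.pi fun _ => {p : Fin n × Fin n | p.1 ∈ S ↔ p.2 ∈ S}) :=
        measureReal_biUnion_finset_le _ _
    _ ≤ ∑ S ∈ 𝒮, x ^ S.card := Finset.sum_le_sum hone
    _ ≤ (1 + x) ^ n - 1 := hlt
    _ ≤ Real.exp (n * x) - 1 := by
        rw [Real.exp_nat_mul]
        gcongr
        linarith [Real.add_one_le_exp x]
    _ ≤ _ := by
        have h1 := Real.add_one_le_exp (-(n * x))
        have h2 : 0 < 1 - n * x := by linarith
        have h3 : Real.exp (n * x) * Real.exp (-(n * x)) = 1 := by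
          rw [← Real.exp_add]; simp
        rw [le_div_iff₀ h2]
        nlinarith [Real.exp_pos (n * x)]

end Signs

section Fin8

lemma card_Ev {n : ℕ} (i0 : Fin n) : (Ev n).card = 2 ^ (n - 1) := by
  classical
  have h1 : (Ev n).card + (Finset.univ.filter fun s : Fin n → ℤˣ => ¬ ∏ i, s i = 1).card = 2 ^ n := by
    unfold Ev
    rw [Finset.card_filter_add_card_filter_not]
    simp [Fintype.card_pi]
  have h2 : (Ev n).card = (Finset.univ.filter fun s : Fin n → ℤˣ => ¬ ∏ i, s i = 1).card := by
    refine Finset.card_equiv (Equiv.mulRight (Pi.mulSingle i0 (-1))) fun s => ?_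
    simp only [mem_Ev, Finset.mem_filter, Finset.mem_univ, true_and, Equiv.coe_mulRight,
      Pi.mul_apply, Finset.prod_mul_distrib, Finset.prod_pi_mulSingle]
    rcases Int.units_eq_one_or (∏ i, s i) with h | h <;> simp [h]
  have hn : n - 1 + 1 = n := Nat.sub_add_cancel (by have := i0.2; omega)
  have h3 : 2 ^ n = 2 ^ (n - 1) * 2 := by rw [← pow_succ, hn]
  omega

instance matSingleton {m n : Type*} [Countable m] [Countable n] :
    MeasurableSingletonClass (Matrix m n ℝ) :=
  inferInstanceAs (MeasurableSingletonClass (m → n → ℝ))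

lemma count_restrict_image {α β : Type*} [MeasurableSpace β] [MeasurableSingletonClass β]
    (A : Finset α) (φ : α → β) (hφ : Set.InjOn φ A) (S : Set β) (hS : S = Set.image φ A) :
    Measure.count.restrict S = ∑ a ∈ A, Measure.dirac (φ a) := by
  classical
  ext s hs
  rw [Measure.restrict_apply hs, Measure.finsetSum_apply]
  have : s ∩ S = ((A.filter fun a => φ a ∈ s).image φ : Finset β) := by
    ext x
    simp only [hS, Set.mem_inter_iff, Set.mem_image, Finset.coe_image, Finset.coe_filter,
      Set.mem_ofPred_eq, Finset.mem_coe]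
    constructor
    · rintro ⟨hx, a, ha, rfl⟩; exact ⟨a, ⟨ha, hx⟩, rfl⟩
    · rintro ⟨a, ⟨ha, hx⟩, rfl⟩; exact ⟨hx, a, ha, rfl⟩
  rw [this, Measure.count_apply_finset, Finset.card_image_of_injOn
    (hφ.mono (by intro x hx; simp at hx; exact hx.1)), Finset.card_filter]
  push_cast
  refine Finset.sum_congr rfl fun a _ => ?_
  rw [Measure.dirac_apply' _ hs]
  simp [Set.indicator]

lemma unit_cast_inj {a b : ℤˣ} (h : ((a : ℤ) : ℝ) = ((b : ℤ) : ℝ)) : a = b :=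
  Units.ext (by exact_mod_cast h)

lemma unit_of_real {x : ℝ} (h : x = 1 ∨ x = -1) : ∃ e : ℤˣ, ((e : ℤ) : ℝ) = x := by
  rcases h with h | h
  · exact ⟨1, by simp [h]⟩
  · exact ⟨-1, by simp [h]⟩

lemma sign_eq {n : ℕ} (i0 : Fin n) : signMeasure n = (((Ev n).card : ℕ) : ℝ≥0∞)⁻¹ •
    ∑ ξ ∈ Ev n, Measure.dirac (fun i => ((ξ i : ℤ) : ℝ)) := by
  unfold signMeasure
  rw [card_Ev i0, count_restrict_image (Ev n) (fun ξ i => ((ξ i : ℤ) : ℝ))]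
  · intro a _ b _ h
    funext i
    exact unit_cast_inj (congrFun h i)
  · ext v
    simp only [Set.mem_ofPred_eq, Set.mem_image, Finset.mem_coe, mem_Ev]
    constructor
    · rintro ⟨h1, h2⟩
      choose e he using fun i => unit_of_real (h1 i)
      refine ⟨e, ?_, funext he⟩
      apply unit_cast_inj
      rw [Units.val_one, Int.cast_one, ← h2]
      push_cast
      exact Finset.prod_congr rfl fun i _ => he i
    · rintro ⟨e, h, rfl⟩
      refine ⟨fun i => ?_, ?_⟩
      · rcases Int.units_eq_one_or (e i) with h | h <;> simp [h]
      · have := congrArg (fun e : ℤˣ => ((e : ℤ) : ℝ)) h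
        simpa using this

lemma SP_inj {n : ℕ} {s t : Fin n → ℤˣ} {σ τ : Equiv.Perm (Fin n)} (h : SP s σ = SP t τ) :
    s = t ∧ σ = τ := by
  have hst : σ = τ := by
    ext j
    have h1 := congrFun (congrFun h (σ j)) j
    simp only [SP, Matrix.of_apply, if_true] at h1
    by_contra hne
    rw [if_neg (fun h => hne (by rw [h]))] at h1
    have : (s (σ j) : ℤ) = 0 := by exact_mod_cast h1
    exact (s (σ j)).ne_zero this
  subst hst
  refine ⟨?_, rfl⟩
  funext i
  have h1 := congrFun (congrFun h i) (σ⁻¹ i)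
  have h2 : σ (σ⁻¹ i) = i := by simp
  simp only [SP, Matrix.of_apply, h2, if_true] at h1
  exact unit_cast_inj h1

lemma perm_eq {n : ℕ} (i0 : Fin n) : signedPermSO n =
    ((n.factorial * (Ev n).card : ℕ) : ℝ≥0∞)⁻¹ •
    ∑ z ∈ (Finset.univ : Finset (Equiv.Perm (Fin n))) ×ˢ Ev n,
      Measure.dirac (SP z.2 1 * SP (liftS i0 z.1) z.1) := by
  unfold signedPermSO
  rw [card_Ev i0, count_restrict_image (Finset.univ ×ˢ Ev n)
    (fun z : Equiv.Perm (Fin n) × (Fin n → ℤˣ) => SP z.2 1 * SP (liftS i0 z.1) z.1)]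
  · rintro ⟨τ, ξ⟩ _ ⟨τ', ξ'⟩ _ h
    simp only [SP_one_mul] at h
    obtain ⟨h1, h2⟩ := SP_inj h
    subst h2
    rw [mul_right_cancel h1]
  · ext M
    simp only [Set.mem_ofPred_eq, Set.mem_image, Finset.mem_coe, Finset.mem_product,
      Finset.mem_univ, true_and, mem_Ev, Prod.exists, SP_one_mul]
    constructor
    · rintro ⟨h1, ⟨σ, h2⟩, h3⟩
      have h4 : ∀ i, M i (σ⁻¹ i) = 1 ∨ M i (σ⁻¹ i) = -1 := by
        intro i
        have := (h2 i (σ⁻¹ i)).2 (by simp)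
        have h5 := h1 i (σ⁻¹ i)
        tauto
      choose e he using fun i => unit_of_real (h4 i)
      have hM : M = SP e σ := by
        ext i j
        simp only [SP, Matrix.of_apply]
        split_ifs with h
        · rw [he, ← h]; simp
        · by_contra hh
          exact h ((h2 i j).1 hh)
      refine ⟨σ, e * (liftS i0 σ), ?_, ?_⟩
      · rw [hM, SP_det] at h3
        simp only [Pi.mul_apply, Finset.prod_mul_distrib, prod_liftS]
        apply unit_cast_inj
        simpa using h3
      · rw [mul_assoc, units_sq_fun, mul_one, hM]
    · rintro ⟨σ, ξ, h, rfl⟩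
      refine ⟨fun i j => ?_, ⟨σ, fun i j => ?_⟩, ?_⟩
      · simp only [SP, Matrix.of_apply]
        split_ifs
        · rcases Int.units_eq_one_or ((ξ * liftS i0 σ) i) with h | h <;> simp [h]
        · simp
      · simp only [SP, Matrix.of_apply]
        split_ifs with hh <;> simp [hh]
      · rw [SP_det]
        simp only [Pi.mul_apply, Finset.prod_mul_distrib, prod_liftS, h, one_mul]
        rw [Int.units_mul_self]; simp

lemma card_Ev_pos {n : ℕ} (i0 : Fin n) : 0 < (Ev n).card := by
  rw [card_Ev i0]; positivity

lemma sign_prob {n : ℕ} (i0 : Fin n) : IsProbabilityMeasure (signMeasure n) := by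
  constructor
  have := card_Ev_pos i0
  rw [sign_eq i0]
  simp only [Measure.smul_apply, Measure.finsetSum_apply, measure_univ, Finset.sum_const,
    nsmul_eq_mul, mul_one, smul_eq_mul]
  exact ENNReal.inv_mul_cancel (by exact_mod_cast this.ne') (by simp)

lemma perm_prob {n : ℕ} (i0 : Fin n) : IsProbabilityMeasure (signedPermSO n) := by
  constructor
  have := card_Ev_pos i0
  have := n.factorial_pos
  rw [perm_eq i0]
  simp only [Measure.smul_apply, Measure.finsetSum_apply, measure_univ, Finset.sum_const,
    nsmul_eq_mul, mul_one, smul_eq_mul, Finset.card_product, Finset.card_univ, Fintype.card_perm,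
    Fintype.card_fin]
  refine ENNReal.inv_mul_cancel ?_ (by exact ENNReal.natCast_ne_top _)
  have : n.factorial * (Ev n).card ≠ 0 := by positivity
  exact_mod_cast this

lemma sign_int {n : ℕ} (i0 : Fin n) (g : (Fin n → ℝ) → ℝ) :
    ∫ v, g v ∂(signMeasure n) = ((Ev n).card : ℝ)⁻¹ * ∑ ξ ∈ Ev n, g (fun i => ((ξ i : ℤ) : ℝ)) := by
  rw [sign_eq i0, integral_smul_measure, integral_finsetSum_measure]
  · simp [integral_dirac]
  · intro i _; exact integrable_dirac (by simp)

lemma perm_int {n : ℕ} (i0 : Fin n) (g : Matrix (Fin n) (Fin n) ℝ → ℝ) :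
    ∫ M, g M ∂(signedPermSO n) = ((n.factorial : ℝ))⁻¹ * ∑ τ : Equiv.Perm (Fin n),
      (((Ev n).card : ℝ)⁻¹ * ∑ ξ ∈ Ev n, g (SP ξ 1 * SP (liftS i0 τ) τ)) := by
  rw [perm_eq i0, integral_smul_measure, integral_finsetSum_measure]
  · simp only [integral_dirac, Finset.sum_product]
    rw [← Finset.mul_sum]
    simp [ENNReal.toReal_inv]
    ring
  · intro i _; exact integrable_dirac (by simp)

variable {d : ℕ} [Fact (2 ≤ d)] {q : Measure ℝ} [IsProbabilityMeasure q]

lemma kac_comm (hq1 : Measure.map (fun θ => mod2pi (-θ)) q = q) (T : ℕ)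
    {Φ : Matrix (Fin d) (Fin d) ℝ → ℝ} (h : Good Φ) (s : Fin d → ℤˣ) (σ : Equiv.Perm (Fin d)) :
    ∫ ω, Φ (kacMatrix ω * SP s σ) ∂(nuT d T q) = ∫ ω, Φ (SP s σ * kacMatrix ω) ∂(nuT d T q) := by
  induction T generalizing Φ with
  | zero => simp only [kac_zero, one_mul, mul_one]
  | succ T ih =>
    rw [kac_int_succ (h.comp_right (SP s σ)), kac_int_succ (h.comp_left (SP s σ))]
    have e1 : ∀ M, Eop q (fun M => Φ (M * SP s σ)) M = Eop q Φ (M * SP s σ) := by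
      intro M; simp only [Eop, mul_assoc]
    have e2 : ∀ M, Eop q (fun M => Φ (SP s σ * M)) M = Eop q Φ (SP s σ * M) :=
      fun M => Eop_SP hq1 h s σ M
    simp only [e1, e2]
    exact ih (Eop_good h)

lemma map_fpair (T : ℕ) :
    Measure.map fpair (nuT d T q) = Measure.pi fun _ : Fin T => pairUniform d := by
  have h : Measure.map Prod.fst (qKacParam d q) = pairUniform d := by
    unfold qKacParam
    rw [Measure.map_fst_prod]; simp
  have h2 : ∀ _ : Fin T, SigmaFinite (Measure.map Prod.fst (qKacParam d q)) := by
    intro _; rw [h]; infer_instance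
  have := Measure.pi_map_pi (μ := fun _ : Fin T => qKacParam d q)
    (f := fun _ => (Prod.fst : (Fin d × Fin d) × ℝ → _)) (fun _ => measurable_fst.aemeasurable)
  simp only [h] at this
  exact this

lemma int_fpair (T : ℕ) (φ : (Fin T → Fin d × Fin d) → ℝ) :
    ∫ ω, φ (fpair ω) ∂(nuT d T q) = ∫ f, φ f ∂(Measure.pi fun _ : Fin T => pairUniform d) := by
  rw [← map_fpair (q := q), integral_map measurable_fpair.aemeasurable
    (measurable_of_finite φ).aestronglyMeasurable]

/-- average over even sign flips -/
def avg (Φ : Matrix (Fin d) (Fin d) ℝ → ℝ) (M : Matrix (Fin d) (Fin d) ℝ) : ℝ :=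
  ((Ev d).card : ℝ)⁻¹ * ∑ ξ ∈ Ev d, Φ (SP ξ 1 * M)

lemma avg_good (i0 : Fin d) {Φ : Matrix (Fin d) (Fin d) ℝ → ℝ} (h : Good Φ) : Good (avg Φ) := by
  have hc : (0 : ℝ) < (Ev d).card := by exact_mod_cast card_Ev_pos i0
  refine ⟨(Finset.measurable_sum _ fun ξ _ => (h.comp_left (SP ξ 1)).1).const_mul _, fun M => ?_⟩
  constructor
  · exact mul_nonneg (by positivity) (Finset.sum_nonneg fun ξ _ => (h.2 _).1)
  · unfold avg
    rw [inv_mul_le_iff₀ hc, mul_one]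
    calc _ ≤ ∑ ξ ∈ Ev d, (1 : ℝ) := Finset.sum_le_sum fun ξ _ => (h.2 _).2
      _ = _ := by simp

lemma avg_inv (Φ : Matrix (Fin d) (Fin d) ℝ → ℝ) (ξ) (hξ : ξ ∈ Ev d) (M) :
    avg Φ (SP ξ 1 * M) = avg Φ M := by
  unfold avg
  congr 1
  refine Finset.sum_equiv (Equiv.mulRight ξ) ?_ ?_
  · intro s
    rw [mem_Ev] at hξ
    simp [mem_Ev, Finset.prod_mul_distrib, hξ]
  · intro s _
    rw [← mul_assoc, SP_one_mul]
    rfl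

lemma step_sign (i0 : Fin d) (hq1 : Measure.map (fun θ => mod2pi (-θ)) q = q)
    (hq2 : Measure.map (fun θ => mod2pi (θ + Real.pi / 2)) q = q) (T : ℕ)
    (hε : (d : ℝ) * Real.exp (-(T : ℝ) / ((d : ℝ) - 1)) < 1)
    {Φ : Matrix (Fin d) (Fin d) ℝ → ℝ} (h : Good Φ) :
    |∫ ω, Φ (kacMatrix ω) ∂(nuT d T q) - ∫ ω, avg Φ (kacMatrix ω) ∂(nuT d T q)| ≤
      (d : ℝ) * Real.exp (-(T : ℝ) / ((d : ℝ) - 1)) /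
        (1 - (d : ℝ) * Real.exp (-(T : ℝ) / ((d : ℝ) - 1))) := by
  classical
  refine le_trans ?_ (disc_prob T hε)
  rw [quenched gfl gfl_sq Real.pi {1} (fun g => g) (fun _ => 1) SP_one_one ?_ hq1 (QInv_pi hq2) T h
    ?_]
  · have hb : ∀ ω : Fin T → (Fin d × Fin d) × ℝ,
        0 ≤ ∑ g, vT gfl T (fpair ω) g * Φ (SP g 1 * kacMatrix ω) ∧
        ∑ g, vT gfl T (fpair ω) g * Φ (SP g 1 * kacMatrix ω) ≤ 1 := by
      intro ω
      refine ⟨Finset.sum_nonneg fun g _ => mul_nonneg (vT_nonneg ..) (h.2 _).1, ?_⟩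
      rw [← vT_sum gfl T (fpair ω)]
      exact Finset.sum_le_sum fun g _ => mul_le_of_le_one_right (vT_nonneg ..) (h.2 _).2
    have hm : Measurable fun ω : Fin T → (Fin d × Fin d) × ℝ =>
        ∑ g, vT gfl T (fpair ω) g * Φ (SP g 1 * kacMatrix ω) :=
      Finset.measurable_sum _ fun g _ => (measurable_fun_fpair fun f => vT gfl T f g).mul
        ((h.comp_left (SP g 1)).1.comp measurable_kac)
    have hi1 : Integrable (fun ω : Fin T → (Fin d × Fin d) × ℝ =>
        ∑ g, vT gfl T (fpair ω) g * Φ (SP g 1 * kacMatrix ω)) (nuT d T q) :=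
      Integrable.of_bound hm.aestronglyMeasurable 1 (ae_of_all _ fun ω => by
        rw [Real.norm_eq_abs, abs_of_nonneg (hb ω).1]; exact (hb ω).2)
    have hi2 := (avg_good i0 h).integrable (nuT d T q) measurable_kac
    rw [← integral_sub hi1 hi2, ← integral_indicator_one (Set.toFinite _).measurableSet,
      ← int_fpair (q := q), ← Real.norm_eq_abs]
    refine norm_integral_le_of_norm_le ?_ (ae_of_all _ fun ω => ?_)
    · refine Integrable.of_bound (measurable_fun_fpair _).aestronglyMeasurable 1
        (ae_of_all _ fun ω => ?_)
      by_cases hc : Conn (fpair ω) <;> simp [Set.indicator, hc]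
    · by_cases hc : Conn (fpair ω)
      · have : ∑ g, vT gfl T (fpair ω) g * Φ (SP g 1 * kacMatrix ω) = avg Φ (kacMatrix ω) := by
          simp only [vT_conn i0 hc, ite_mul, zero_mul, Finset.sum_ite_mem, Finset.univ_inter]
          rw [← Finset.mul_sum]; rfl
        rw [this]; simp [Set.indicator, hc]
      · have h1 := hb ω
        have h2 := (avg_good i0 h).2 (kacMatrix ω)
        simp only [Set.indicator, Set.mem_ofPred_eq, hc, not_false_eq_true, if_true, Pi.one_apply]
        rw [Real.norm_eq_abs, abs_le]
        constructor <;> linarith [h1.1, h1.2, h2.1, h2.2]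
  · intro g p hp
    refine ⟨1, rfl, ?_⟩
    rw [rotM_pi hp, SP_one_mul, SP_one_one, one_mul]
  · rintro ξ rfl M
    rw [SP_one_one, one_mul]

lemma step_perm (hd : 10 ≤ d) (i0 : Fin d) (hq1 : Measure.map (fun θ => mod2pi (-θ)) q = q)
    (hq2 : Measure.map (fun θ => mod2pi (θ + Real.pi / 2)) q = q) (T : ℕ) (κ : ℝ) (hκ : 12 ≤ κ)
    (hT : (T : ℝ) = d * (3 * Real.log d + κ))
    {Φ : Matrix (Fin d) (Fin d) ℝ → ℝ} (h : Good Φ)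
    (hΦ : ∀ ξ ∈ Ev d, ∀ M, Φ (SP ξ 1 * M) = Φ M) :
    |∫ ω, Φ (kacMatrix ω) ∂(nuT d T q) - (d.factorial : ℝ)⁻¹ * ∑ τ : Equiv.Perm (Fin d),
      ∫ ω, Φ (SP (liftS i0 τ) τ * kacMatrix ω) ∂(nuT d T q)| ≤ Real.exp (-κ / 6) := by
  classical
  rw [quenched gsw (fun p => by simp [gsw]) (Real.pi / 2) (Ev d) (liftS i0) (fun g => g)
    (by simp [liftS, SP_one_one]) (lift_step i0) hq1 (QInv_half hq2) T h hΦ]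
  set t := Real.exp (-κ / 6) with ht
  have ht0 : 0 < t := Real.exp_pos _
  have hH : ∀ (ω : Fin T → (Fin d × Fin d) × ℝ) (τ : Equiv.Perm (Fin d)),
    0 ≤ Φ (SP (liftS i0 τ) τ * kacMatrix ω) ∧ Φ (SP (liftS i0 τ) τ * kacMatrix ω) ≤ 1 :=
      fun ω τ => h.2 _
  have hv1 : ∀ (f : Fin T → Fin d × Fin d) (g : Equiv.Perm (Fin d)), vT gsw T f g ≤ (1 : ℝ) := by
    intro f g
    rw [← vT_sum gsw T f]
    exact Finset.single_le_sum (fun g _ => vT_nonneg gsw T f g) (Finset.mem_univ g)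
  have hi0 : ∀ τ : Equiv.Perm (Fin d), Integrable (fun ω => Φ (SP (liftS i0 τ) τ * kacMatrix ω))
      (nuT d T q) := fun τ => (h.comp_left _).integrable _ measurable_kac
  have hi1 : Integrable (fun ω : Fin T → (Fin d × Fin d) × ℝ =>
        ∑ g, vT gsw T (fpair ω) g * Φ (SP (liftS i0 g) g * kacMatrix ω)) (nuT d T q) := by
    refine integrable_finsetSum _ fun g _ => ?_
    refine Integrable.of_bound ((measurable_fun_fpair fun f => vT gsw T f g).mul
        ((h.comp_left (SP (liftS i0 g) g)).1.comp measurable_kac)).aestronglyMeasurable 1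
        (ae_of_all _ fun ω => ?_)
    rw [norm_mul]
    refine mul_le_one₀ ?_ (norm_nonneg _) (h.abs _)
    rw [Real.norm_eq_abs, abs_of_nonneg (vT_nonneg ..)]
    exact hv1 _ _
  rw [← integral_finsetSum _ fun τ _ => hi0 τ, ← integral_const_mul,
    ← integral_sub hi1 ((integrable_finsetSum _ fun τ _ => hi0 τ).const_mul _), ← Real.norm_eq_abs]
  have hiW : Integrable (fun ω => (WW T (fpair ω) / t + t) / 2) (nuT d T q) := by
    have hm := measurable_fun_fpair (d := d) (T := T) fun f => (WW T f / t + t) / 2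
    refine Integrable.of_bound hm.aestronglyMeasurable
      (∑ f : Fin T → Fin d × Fin d, |(WW T f / t + t) / 2|) (ae_of_all _ fun ω => ?_)
    exact Finset.single_le_sum (f := fun f : Fin T → Fin d × Fin d => |(WW T f / t + t) / 2|)
      (fun f _ => abs_nonneg _) (Finset.mem_univ (fpair ω))
  have hiW0 : Integrable (fun f => WW T f / t) (Measure.pi fun _ : Fin T => pairUniform d) :=
    Integrable.of_finite
  refine (norm_integral_le_of_norm_le hiW (ae_of_all _ fun ω =>
    WW_dev (fpair ω) ht0 _ (hH ω))).trans ?_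
  rw [int_fpair (q := q) T fun f => (WW T f / t + t) / 2, integral_div, integral_add hiW0
    (integrable_const _), integral_div]
  have hW := WW_bound hd hκ hT
  have htt : Real.exp (-κ / 3) = t * t := by rw [ht, ← Real.exp_add]; congr 1; ring
  rw [htt] at hW
  simp only [integral_const, probReal_univ, smul_eq_mul, one_mul]
  have : (∫ f, WW T f ∂(Measure.pi fun _ : Fin T => pairUniform d)) / t ≤ t := by
    rwa [div_le_iff₀ ht0]
  linarith

abbrev targ (d T : ℕ) (q : Measure ℝ) : Measure (Matrix (Fin d) (Fin d) ℝ) :=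
  (Measure.map
            (fun z : Matrix (Fin d) (Fin d) ℝ ×
                ((Fin T → (Fin d × Fin d) × ℝ) × (Fin d → ℝ)) =>
              z.1 * kacMatrix z.2.1 * Matrix.diagonal z.2.2)
            ((signedPermSO d).prod
              ((Measure.pi fun _ : Fin T => qKacParam d q).prod (signMeasure d))))

lemma targ_meas {T : ℕ} : Measurable (fun z : Matrix (Fin d) (Fin d) ℝ ×
                ((Fin T → (Fin d × Fin d) × ℝ) × (Fin d → ℝ)) =>
              z.1 * kacMatrix z.2.1 * Matrix.diagonal z.2.2) := by
  refine Measurable.matMul (Measurable.matMul measurable_fst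
    (measurable_kac.comp (measurable_fst.comp measurable_snd))) ?_
  refine measurable_of_entries fun i j => ?_
  simp only [Matrix.diagonal_apply]
  split_ifs <;> fun_prop

lemma targ_int (i0 : Fin d) (hq1 : Measure.map (fun θ => mod2pi (-θ)) q = q) (T : ℕ)
    {Φ : Matrix (Fin d) (Fin d) ℝ → ℝ} (h : Good Φ) :
    ∫ M, Φ M ∂(targ d T q) = (d.factorial : ℝ)⁻¹ * ∑ τ : Equiv.Perm (Fin d),
      ∫ ω, avg Φ (SP (liftS i0 τ) τ * kacMatrix ω) ∂(nuT d T q) := by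
  have := sign_prob i0
  have := perm_prob i0
  have hc : (0 : ℝ) < (Ev d).card := by exact_mod_cast card_Ev_pos i0
  have hag := avg_good i0 h
  rw [integral_map targ_meas.aemeasurable h.1.aestronglyMeasurable,
    integral_prod _ (h.integrable _ targ_meas), perm_int i0]
  congr 1
  refine Finset.sum_congr rfl fun τ _ => ?_
  have e1 : ∀ A : Matrix (Fin d) (Fin d) ℝ,
      ∫ y : (Fin T → (Fin d × Fin d) × ℝ) × (Fin d → ℝ),
        Φ (A * kacMatrix y.1 * Matrix.diagonal y.2) ∂((nuT d T q).prod (signMeasure d)) =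
      ((Ev d).card : ℝ)⁻¹ * ∑ ξ ∈ Ev d, ∫ ω, Φ (A * SP ξ 1 * kacMatrix ω) ∂(nuT d T q) := by
    intro A
    have hA : Measurable fun y : (Fin T → (Fin d × Fin d) × ℝ) × (Fin d → ℝ) =>
        A * kacMatrix y.1 * Matrix.diagonal y.2 :=
      targ_meas.comp (measurable_const.prodMk measurable_id)
    rw [integral_prod _ (h.integrable _ hA)]
    simp only [sign_int i0]
    rw [integral_const_mul, integral_finsetSum]
    · congr 1
      refine Finset.sum_congr rfl fun ξ _ => ?_
      rw [← SP_one_eq]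
      have := kac_comm hq1 T (h.comp_left A) ξ 1
      simpa only [mul_assoc] using this
    · intro ξ _
      exact h.integrable _ (Measurable.matMul (Measurable.matMul measurable_const measurable_kac)
        measurable_const)
  simp only [e1]
  rw [← Finset.mul_sum, Finset.sum_comm]
  have e2 : ∀ ξ ∈ Ev d, ((Ev d).card : ℝ)⁻¹ * ∑ η ∈ Ev d,
      ∫ ω, Φ (SP η 1 * SP (liftS i0 τ) τ * SP ξ 1 * kacMatrix ω) ∂(nuT d T q) =
      ∫ ω, avg Φ (SP (liftS i0 τ) τ * kacMatrix ω) ∂(nuT d T q) := by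
    intro ξ hξ
    rw [← integral_finsetSum, ← integral_const_mul]
    · refine integral_congr_ae (ae_of_all _ fun ω => ?_)
      have hξ' : (fun i => ξ (τ⁻¹ i)) ∈ Ev d := by
        rw [mem_Ev] at hξ ⊢
        rw [← hξ]
        exact Equiv.prod_comp τ⁻¹ ξ
      have e3 : SP (liftS i0 τ) τ * SP ξ 1 =
          SP (fun i => ξ (τ⁻¹ i)) 1 * SP (liftS i0 τ) τ := by
        rw [SP_mul, SP_one_mul, mul_one, mul_comm]
      change _ = avg Φ (SP (liftS i0 τ) τ * kacMatrix ω)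
      rw [← avg_inv Φ _ hξ', ← mul_assoc, ← e3]
      simp only [avg, mul_assoc]
    · intro η _
      exact h.integrable _ (Measurable.matMul measurable_const measurable_kac)
  rw [Finset.mul_sum, Finset.sum_congr rfl e2, Finset.sum_const, nsmul_eq_mul, ← mul_assoc,
    inv_mul_cancel₀ hc.ne', one_mul]

end Fin8

theorem symmetric_kac_aux :
    ∀ (d T : ℕ), 10 ≤ d →
      ∀ (q : Measure ℝ), IsProbabilityMeasure q →
      Measure.map (fun θ => mod2pi (-θ)) q = q →
      Measure.map (fun θ => mod2pi (θ + Real.pi / 2)) q = q →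
      (d : ℝ) * Real.exp (-(T : ℝ) / ((d : ℝ) - 1)) < 1 →
      tvDist (qKacMeasure d T q) (targ d T q) ≤
        2 * (d : ℝ) * Real.exp (-(T : ℝ) / ((d : ℝ) - 1)) /
            (1 - (d : ℝ) * Real.exp (-(T : ℝ) / ((d : ℝ) - 1))) +
          Real.exp 2 * ((d : ℝ) ^ ((1 : ℝ) / 2) * Real.exp (-(T : ℝ) / (6 * d)) +
            ((d.factorial : ℝ)) ^ ((1 : ℝ) / 2) *
              ((Real.sqrt 5 - 1) / 2) ^ ((T : ℝ) / 2)) := by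
  intro d T hd q _ hq1 hq2 hε
  have : Fact (2 ≤ d) := ⟨by omega⟩
  let i0 : Fin d := ⟨0, by omega⟩
  have := sign_prob i0
  have := perm_prob i0
  have hkm : IsProbabilityMeasure (qKacMeasure d T q) :=
    Measure.isProbabilityMeasure_map measurable_kac.aemeasurable
  have htm : IsProbabilityMeasure (targ d T q) :=
    Measure.isProbabilityMeasure_map targ_meas.aemeasurable
  have hd0 : (0 : ℝ) < d := by exact_mod_cast (by omega : 0 < d)
  set ε := (d : ℝ) * Real.exp (-(T : ℝ) / ((d : ℝ) - 1)) with hεdef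
  have hε0 : 0 < ε := by positivity
  have hphi : 0 ≤ ((d.factorial : ℝ)) ^ ((1 : ℝ) / 2) *
              ((Real.sqrt 5 - 1) / 2) ^ ((T : ℝ) / 2) := by
    have : (1 : ℝ) ≤ Real.sqrt 5 := Real.one_le_sqrt.2 (by norm_num)
    have : 0 ≤ (Real.sqrt 5 - 1) / 2 := by linarith
    positivity
  set ph := ((d.factorial : ℝ)) ^ ((1 : ℝ) / 2) *
              ((Real.sqrt 5 - 1) / 2) ^ ((T : ℝ) / 2) with hph
  set κ := (T : ℝ) / d - 3 * Real.log d with hκdef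
  have hte : (d : ℝ) ^ ((1 : ℝ) / 2) * Real.exp (-(T : ℝ) / (6 * d)) = Real.exp (-κ / 6) := by
    rw [Real.rpow_def_of_pos hd0, ← Real.exp_add]
    congr 1
    rw [hκdef]; field_simp; ring
  rw [hte, mul_assoc 2, ← hεdef]
  have hδ : 0 ≤ ε / (1 - ε) := div_nonneg hε0.le (by linarith)
  have h2δ : 2 * ε / (1 - ε) = 2 * (ε / (1 - ε)) := by ring
  rw [h2δ]
  have he2 : 1 ≤ Real.exp 2 := Real.one_le_exp (by norm_num)
  have hph2 : 0 ≤ Real.exp 2 * ph := by positivity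
  rw [mul_add]
  have : Nonempty {s : Set (Matrix (Fin d) (Fin d) ℝ) // MeasurableSet s} :=
    ⟨⟨∅, MeasurableSet.empty⟩⟩
  refine ciSup_le fun s => ?_
  obtain ⟨s, hs⟩ := s
  change |(qKacMeasure d T q).real s - (targ d T q).real s| ≤ _
  by_cases hκ : 12 ≤ κ
  · let Φ : Matrix (Fin d) (Fin d) ℝ → ℝ := s.indicator 1
    have hΦ : Good Φ := by
      refine ⟨measurable_one.indicator hs, fun M => ?_⟩
      by_cases hM : M ∈ s <;> simp [Φ, Set.indicator, hM]
    have ha : (qKacMeasure d T q).real s = ∫ ω, Φ (kacMatrix ω) ∂(nuT d T q) := by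
      rw [← integral_indicator_one hs]
      unfold qKacMeasure
      rw [integral_map measurable_kac.aemeasurable hΦ.1.aestronglyMeasurable]
    have hb : (targ d T q).real s = ∫ M, Φ M ∂(targ d T q) := (integral_indicator_one hs).symm
    rw [ha, hb, targ_int i0 hq1 T hΦ]
    have s1 := step_sign i0 hq1 hq2 T hε hΦ
    have s2 := step_perm hd i0 hq1 hq2 T κ hκ (by rw [hκdef]; field_simp; ring)
      (avg_good i0 hΦ) (fun ξ hξ M => avg_inv Φ ξ hξ M)
    have h3 := abs_sub_le (∫ ω, Φ (kacMatrix ω) ∂(nuT d T q))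
      (∫ ω, avg Φ (kacMatrix ω) ∂(nuT d T q)) ((d.factorial : ℝ)⁻¹ * ∑ τ : Equiv.Perm (Fin d),
      ∫ ω, avg Φ (SP (liftS i0 τ) τ * kacMatrix ω) ∂(nuT d T q))
    have h4 : Real.exp (-κ / 6) ≤ Real.exp 2 * Real.exp (-κ / 6) :=
      le_mul_of_one_le_left (Real.exp_pos _).le he2
    rw [← hεdef] at s1
    linarith
  · have h1 : 1 ≤ Real.exp 2 * Real.exp (-κ / 6) := by
      rw [← Real.exp_add]
      apply Real.one_le_exp
      linarith [not_le.1 hκ]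
    have a1 := measureReal_le_one (μ := qKacMeasure d T q) (s := s)
    have a2 := measureReal_le_one (μ := targ d T q) (s := s)
    have a3 : 0 ≤ (qKacMeasure d T q).real s := measureReal_nonneg
    have a4 : 0 ≤ (targ d T q).real s := measureReal_nonneg
    rw [abs_le]
    constructor <;> linarith

/-- **Lemma 2.6**: for a symmetric `q`-Kac walk, the law of `Q_T` is close in total
variation to the law of `Σ Q_T D_ξ`, where `Σ` is a uniform signed permutation matrix in
`SO(d)` and `ξ` a uniform sign vector conditioned on having product `1`, all independent. -/
theorem symmetric_kac_signed_perm_invariance :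
    ∃ C : ℝ, 0 < C ∧
      ∀ (d T : ℕ), 10 ≤ d →
      ∀ (q : Measure ℝ), IsProbabilityMeasure q →
      q (Set.Ico 0 (2 * Real.pi))ᶜ = 0 →
      Measure.map (fun θ => mod2pi (-θ)) q = q →
      Measure.map (fun θ => mod2pi (θ + Real.pi / 2)) q = q →
      (d : ℝ) * Real.exp (-(T : ℝ) / ((d : ℝ) - 1)) < 1 →
      tvDist (qKacMeasure d T q)
          (Measure.map
            (fun z : Matrix (Fin d) (Fin d) ℝ ×
                ((Fin T → (Fin d × Fin d) × ℝ) × (Fin d → ℝ)) =>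
              z.1 * kacMatrix z.2.1 * Matrix.diagonal z.2.2)
            ((signedPermSO d).prod
              ((Measure.pi fun _ : Fin T => qKacParam d q).prod (signMeasure d)))) ≤
        2 * (d : ℝ) * Real.exp (-(T : ℝ) / ((d : ℝ) - 1)) /
            (1 - (d : ℝ) * Real.exp (-(T : ℝ) / ((d : ℝ) - 1))) +
          C * ((d : ℝ) ^ ((1 : ℝ) / 2) * Real.exp (-(T : ℝ) / (6 * d)) +
            ((d.factorial : ℝ)) ^ ((1 : ℝ) / 2) *
              ((Real.sqrt 5 - 1) / 2) ^ ((T : ℝ) / 2)) := by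
  refine ⟨Real.exp 2, Real.exp_pos 2, ?_⟩
  intro d T hd q hq _ hq1 hq2 hε
  exact symmetric_kac_aux d T hd q hq hq1 hq2 hε

end KacJL
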